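/- arXiv:1010.3965 — 5 statements merged into one kernel-verified Lean document; each statement's English description precedes it below -/
import Mathlib

section
/- Let k be a fixed even positive integer with k ≠ 6 and k not a power of 2. Then D(x^k) is a hyperoval in PG(2, 2^e) for at most finitely many positive integers e; equivalently, the set of positive integers e such that x·y^k + y·x^k + x·z^k + z·x^k + y·z^k + z·y^k ≠ 0 for all pairwise distinct x, y, z ∈ GF(2^e) is finite. -/
/-- Closed walks in the carry graph of multiplication by `2 * m`. -/
inductive CarryWalk (m : ℕ) : ℕ → ℕ → ℕ → Prop
  | nil (a : ℕ) : CarryWalk m 0 a a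
  | half {n a c : ℕ} : CarryWalk m n a c → CarryWalk m (n + 1) a (c / 2)
  | jump {n a c : ℕ} : CarryWalk m n a c → c % 2 = 1 → CarryWalk m (n + 1) a (m + c / 2)

theorem CarryWalk.trans {m n p a b c : ℕ} (h : CarryWalk m n a b) (h' : CarryWalk m p b c) :
    CarryWalk m (n + p) a c := by
  induction h' with
  | nil => exact h
  | half _ ih => exact (ih h).half
  | jump _ ho ih => exact (ih h).jump ho

theorem CarryWalk.halves {m n a c : ℕ} (h : CarryWalk m n a c) (i : ℕ) :
    CarryWalk m (n + i) a (c / 2 ^ i) := by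
  induction i with
  | zero => simpa using h
  | succ i ih =>
    have := ih.half
    rw [Nat.div_div_eq_div_mul, ← pow_succ] at this
    exact this

theorem CarryWalk.step {m n a c : ℕ} (h : CarryWalk m n a c) (i x y n' : ℕ)
    (hx : c / 2 ^ i = x) (ho : x % 2 = 1) (hy : m + x / 2 = y) (hn : n + i + 1 = n') :
    CarryWalk m n' a y := by
  subst hx hy hn
  exact (h.halves i).jump ho

theorem CarryWalk.fin {m n a c : ℕ} (h : CarryWalk m n a c) (i n' : ℕ)
    (h1 : 2 ^ i ≤ c) (h2 : c < 2 ^ (i + 1)) (hn : n + i = n') :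
    CarryWalk m n' a 1 := by
  subst hn
  have := h.halves i
  rwa [Nat.div_eq_of_lt_le (k := 1) (by omega) (by rw [pow_succ] at h2; omega)] at this

theorem CarryWalk.sets {m n a c : ℕ} (h : CarryWalk m n a c) :
    ∃ S J : Finset ℕ, S ⊆ Finset.range n ∧ J ⊆ Finset.range n ∧ Disjoint S J ∧
      2 * m * (∑ i ∈ S, 2 ^ i) + (∑ i ∈ J, 2 ^ i) + a + 1 = 2 ^ n * (c + 1) := by
  induction h with
  | nil => exact ⟨∅, ∅, by simp, by simp, by simp, by simp⟩
  | @half n a c _ ih =>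
    obtain ⟨S, J, hS, hJ, hd, he⟩ := ih
    have hnS : n ∉ S := fun h => by simpa using hS h
    have hnJ : n ∉ J := fun h => by simpa using hJ h
    have hr : Finset.range n ⊆ Finset.range (n + 1) := Finset.range_subset_range.2 (by omega)
    rcases Nat.mod_two_eq_zero_or_one c with hc | hc
    · refine ⟨S, insert n J, hS.trans hr, ?_, ?_, ?_⟩
      · intro x hx
        rcases Finset.mem_insert.1 hx with rfl | hx
        · simp
        · exact hr (hJ hx)
      · rw [Finset.disjoint_insert_right]; exact ⟨hnS, hd⟩
      · rw [Finset.sum_insert hnJ]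
        obtain ⟨d, rfl⟩ : ∃ d, c = 2 * d := ⟨c / 2, by omega⟩
        rw [Nat.mul_div_cancel_left _ (by norm_num), pow_succ]
        linarith
    · refine ⟨S, J, hS.trans hr, hJ.trans hr, hd, ?_⟩
      rw [he]
      obtain ⟨d, rfl⟩ : ∃ d, c = 2 * d + 1 := ⟨c / 2, by omega⟩
      rw [show (2 * d + 1) / 2 = d by omega, pow_succ]
      ring
  | @jump n a c _ hc ih =>
    obtain ⟨S, J, hS, hJ, hd, he⟩ := ih
    have hnS : n ∉ S := fun h => by simpa using hS h
    have hnJ : n ∉ J := fun h => by simpa using hJ h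
    have hr : Finset.range n ⊆ Finset.range (n + 1) := Finset.range_subset_range.2 (by omega)
    refine ⟨insert n S, J, ?_, hJ.trans hr, ?_, ?_⟩
    · intro x hx
      rcases Finset.mem_insert.1 hx with rfl | hx
      · simp
      · exact hr (hS hx)
    · rw [Finset.disjoint_insert_left]; exact ⟨hnJ, hd⟩
    · rw [Finset.sum_insert hnS]
      obtain ⟨d, rfl⟩ : ∃ d, c = 2 * d + 1 := ⟨c / 2, by omega⟩
      rw [show (2 * d + 1) / 2 = d by omega, pow_succ]
      linarith

theorem walk_cycles (m : ℕ) (hm : 0 < m) (hm3 : m ≠ 3) (hm2 : ∀ i : ℕ, m ≠ 2 ^ i) (g : ℕ)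
    (hg : ∀ n, CarryWalk m n 1 1 → g ∣ n) : g = 1 := by
  obtain ⟨a, ha1, ha2⟩ : ∃ a, 2 ^ a ≤ m ∧ m < 2 ^ (a + 1) :=
    ⟨Nat.log 2 m, Nat.pow_log_le_self 2 hm.ne', Nat.lt_pow_succ_log_self (by norm_num) m⟩
  obtain ⟨r, rfl⟩ : ∃ r, m = 2 ^ a + r := ⟨m - 2 ^ a, by omega⟩
  have hr : 0 < r := by
    rcases Nat.eq_zero_or_pos r with rfl | h
    · exact absurd rfl (hm2 a)
    · exact h
  have hra : r < 2 ^ a := by rw [pow_succ] at ha2; omega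
  obtain ⟨s, hs1, hs2⟩ : ∃ s, 2 ^ s ≤ r ∧ r < 2 ^ (s + 1) :=
    ⟨Nat.log 2 r, Nat.pow_log_le_self 2 hr.ne', Nat.lt_pow_succ_log_self (by norm_num) r⟩
  have hsa : s < a := (Nat.pow_lt_pow_iff_right (by norm_num : 1 < 2)).1 (hs1.trans_lt hra)
  set m := 2 ^ a + r with hmdef
  have w0 : CarryWalk m 1 1 m := (CarryWalk.nil 1).step 0 1 m 1 (by simp) rfl (by simp) rfl
  have hL : g ∣ a + 1 := hg _ (w0.fin a _ ha1 ha2 (by ring))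
  -- it suffices to find one closed walk with length congruent to `±1`
  have fin1 : ∀ n, CarryWalk m n 1 1 → (n = 2 * a + 1 ∨ n = 2 * (a + 1) + 1) → g = 1 := by
    intro n hn h
    have h1 := hg _ hn
    have h2 : g ∣ 2 * (a + 1) := Dvd.dvd.mul_left hL 2
    rcases h with rfl | rfl
    · have := (Nat.dvd_sub h2 h1)
      rw [show 2 * (a + 1) - (2 * a + 1) = 1 by omega] at this
      exact Nat.dvd_one.1 this
    · have := (Nat.dvd_sub h1 h2)
      rw [show 2 * (a + 1) + 1 - 2 * (a + 1) = 1 by omega] at this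
      exact Nat.dvd_one.1 this
  obtain ⟨t, rfl⟩ : ∃ t, a = s + 1 + t := ⟨a - s - 1, by omega⟩
  have e1 : 2 ^ (s + 1) = 2 * 2 ^ s := by ring
  rcases Nat.eq_zero_or_pos t with rfl | ht
  · -- top bits 11
    rw [add_zero] at *
    have e2 : 2 ^ (s + 1 + 1) = 4 * 2 ^ s := by ring
    by_cases hmax : m + 1 < 2 ^ (s + 1 + 1)
    · have w1 := w0.step s 3 (m + 1) (s + 2)
        (Nat.div_eq_of_lt_le (by omega) (by omega)) rfl rfl (by ring)
      exact fin1 _ (w1.fin (s + 1) _ (by omega) hmax rfl) (by omega)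
    · obtain ⟨v, rfl⟩ : ∃ v, s = v + 1 := by
        rcases Nat.eq_zero_or_pos s with rfl | h
        · exfalso; simp at *; omega
        · exact ⟨s - 1, by omega⟩
      have e3 : 2 ^ (v + 1) = 2 * 2 ^ v := by ring
      have e4 : 0 < 2 ^ v := by positivity
      have e5 : 2 ^ (v + 1 + 1 + 1 + 1) = 16 * 2 ^ v := by ring
      have w1 := w0.step v 7 (m + 3) (v + 2)
        (Nat.div_eq_of_lt_le (by omega) (by omega)) rfl rfl (by ring)
      exact fin1 _ (w1.fin (v + 1 + 1 + 1) _ (by omega) (by omega) rfl) (by omega)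
  · obtain ⟨u, rfl⟩ : ∃ u, t = u + 1 := ⟨t - 1, by omega⟩
    -- `m = 2^(s+u+2) + 2^s + ...`
    have p1 : 0 < 2 ^ s := by positivity
    have p2 : 0 < 2 ^ u := by positivity
    have e2 : 2 ^ (s + 1 + (u + 1)) = 4 * (2 ^ u * 2 ^ s) := by ring
    have e3 : 2 ^ (s + 1 + (u + 1) + 1) = 8 * (2 ^ u * 2 ^ s) := by ring
    have q1 : 2 ^ u ≤ 2 ^ u * 2 ^ s := Nat.le_mul_of_pos_right _ p1
    have q2 : 2 ^ s ≤ 2 ^ u * 2 ^ s := Nat.le_mul_of_pos_left _ p2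
    have e4 : 2 ^ (u + 1) = 2 * 2 ^ u := by ring
    have e5 : 2 ^ (u + 2) = 4 * 2 ^ u := by ring
    have d1 : 2 ^ s ≤ m / 2 ^ (u + 2) := by
      rw [Nat.le_div_iff_mul_le (by positivity), e5]
      nlinarith
    have d2 : m / 2 ^ (u + 2) < 2 ^ (s + 1) := by
      rw [Nat.div_lt_iff_lt_mul (by positivity), e5, e1]
      nlinarith
    have dd : m / 2 ^ (u + 1) / 2 = m / 2 ^ (u + 2) := by
      rw [Nat.div_div_eq_div_mul, ← pow_succ]
    -- common tail
    have tail : ∀ n, CarryWalk m n 1 (m + m / 2 ^ (u + 2)) →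
        CarryWalk m (n + (s + 1) + 1 + (s + 1 + (u + 1))) 1 1 := by
      intro n hn
      have w := hn.step (s + 1) (2 ^ (u + 1) + 1) (m + 2 ^ u) (n + (s + 1) + 1)
        (Nat.div_eq_of_lt_le (by rw [e1, e4]; nlinarith) (by rw [e1, e4]; nlinarith))
        (by omega) (by omega) rfl
      exact w.fin _ _ (by omega) (by omega) rfl
    rcases Nat.mod_two_eq_zero_or_one (m / 2 ^ (u + 1)) with hb | hb
    · have w1 := w0.step s (2 ^ (u + 2) + 1) (m + 2 ^ (u + 1)) (s + 2)
        (Nat.div_eq_of_lt_le (by rw [e5]; nlinarith) (by rw [e5]; nlinarith))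
        (by omega) (by omega) (by ring)
      have c1 := w1.fin (s + 1 + (u + 1)) _ (by omega) (by omega) rfl
      have w2 := w1.step (u + 1) (m / 2 ^ (u + 1) + 1) (m + m / 2 ^ (u + 2)) (s + 2 + (u + 1) + 1)
        (Nat.add_div_right _ (by positivity))
        (by omega) (by omega) rfl
      have c2 := tail _ w2
      have := Nat.dvd_sub (Nat.dvd_sub (hg _ c2) (hg _ c1)) hL
      rw [show s + 2 + (u + 1) + 1 + (s + 1) + 1 + (s + 1 + (u + 1)) - (s + 2 + (s + 1 + (u + 1)))
        - (s + 1 + (u + 1) + 1) = 1 by omega] at this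
      exact Nat.dvd_one.1 this
    · have w2 := w0.step (u + 1) (m / 2 ^ (u + 1)) (m + m / 2 ^ (u + 2)) (u + 3)
        rfl hb (by rw [dd]) (by ring)
      exact fin1 _ (tail _ w2) (by omega)

theorem walk_eventually (m : ℕ) (hm : 0 < m) (hm3 : m ≠ 3) (hm2 : ∀ i : ℕ, m ≠ 2 ^ i) :
    ∃ N, ∀ e ≥ N, CarryWalk m e 1 1 := by
  obtain ⟨N, hN⟩ := Nat.exists_mem_closure_of_ge {n | CarryWalk m n 1 1}
  refine ⟨N, fun e he => ?_⟩
  have h1 : Nat.setGcd {n | CarryWalk m n 1 1} = 1 :=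
    walk_cycles m hm hm3 hm2 _ fun n hn => Nat.setGcd_dvd_of_mem hn
  have := hN e he (by rw [h1]; exact one_dvd _)
  refine AddSubmonoid.closure_induction (motive := fun n _ => CarryWalk m n 1 1) ?_ ?_ ?_ this
  · intro x hx; exact hx
  · exact CarryWalk.nil 1
  · intro x y _ _ hx hy; exact hx.trans hy

section FieldPart

variable {F : Type*} [Field F] [Fintype F] [DecidableEq F] [CharP F 2]

theorem sum_pow_eq_ite (i : ℕ) (hi : 0 < i) :
    ∑ x : F, x ^ i = if Fintype.card F - 1 ∣ i then 1 else 0 := by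
  have h := FiniteField.sum_pow_units F i
  rw [Fintype.sum_eq_add_sum_compl (0 : F), zero_pow hi.ne', zero_add]
  rw [CharTwo.neg_eq] at h
  rw [← h]
  symm
  refine Finset.sum_bij (fun u _ => (u : F)) ?_ ?_ ?_ ?_
  · intro u _; simp
  · intro u _ v _ huv; exact Units.ext huv
  · intro b hb
    have hb : b ≠ 0 := by simpa using hb
    exact ⟨Units.mk0 b hb, Finset.mem_univ _, rfl⟩
  · intro u _; simp

/-- Hermite-type consequence of the hyperoval condition. -/
theorem hyperoval_sum (k : ℕ) (hk : Even k) (hkq : k ≤ Fintype.card F - 1)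
    (H : ∀ x y z : F, x ≠ y → x ≠ z → y ≠ z →
      x * y ^ k + y * x ^ k + x * z ^ k + z * x ^ k + y * z ^ k + z * y ^ k ≠ 0)
    (n : ℕ) (hn0 : 0 < n) (hn : n < Fintype.card F - 1) :
    ∑ y : F, (1 + y ^ k) ^ n * (1 + y) ^ (Fintype.card F - 1 - n) = 0 := by
  have two : (2 : F) = 0 := CharTwo.two_eq_zero
  set g : F → F := fun y => ∑ j ∈ Finset.range k, y ^ j with hg
  have hgm : ∀ y, g y * (1 + y) = 1 + y ^ k := by
    intro y
    have := geom_sum_mul y k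
    rw [CharTwo.sub_eq_add, CharTwo.sub_eq_add] at this
    rw [add_comm 1 y, add_comm 1 (y ^ k)]
    exact this
  have hg1 : g 1 = 0 := by
    simp only [hg, one_pow, Finset.sum_const, Finset.card_range, nsmul_eq_mul, mul_one]
    exact (CharP.cast_eq_zero_iff F 2 k).2 hk.two_dvd
  have hy1 : ∀ y : F, y ≠ 1 → 1 + y ≠ 0 := by
    intro y hy h
    apply hy
    have := CharTwo.add_eq_zero.1 h
    exact this.symm
  have hsg : ∑ y : F, g y = 0 := by
    simp only [hg]
    rw [Finset.sum_comm]
    refine Finset.sum_eq_zero fun j hj => ?_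
    exact FiniteField.sum_pow_lt_card_sub_one F j (by simp at hj; omega)
  have hinj : Set.InjOn g ((Finset.univ.erase (1 : F) : Finset F) : Set F) := by
    intro x hx y hy hxy
    have hx : x ≠ 1 := by simpa using hx
    have hy : y ≠ 1 := by simpa using hy
    by_contra hne
    apply H x y 1 hne hx hy
    have a1 := hgm x
    have a2 := hgm y
    rw [hxy] at a1
    have : (1 + x ^ k) * (1 + y) = (1 + y ^ k) * (1 + x) := by
      rw [← a1, ← a2]; ring
    linear_combination this + two * (x + y ^ k + x * y ^ k)
  have key : ∀ f : F → F, ∑ y ∈ Finset.univ.erase (1 : F), f (g y)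
      = ∑ v ∈ (Finset.univ.erase (1 : F)).image g, f v := by
    intro f
    rw [Finset.sum_image hinj]
  have hcard : ((Finset.univ.erase (1 : F)).image g).card = Fintype.card F - 1 := by
    rw [Finset.card_image_of_injOn hinj, Finset.card_erase_of_mem (Finset.mem_univ _),
      Finset.card_univ]
  obtain ⟨τ, hτ⟩ : ∃ τ, ((Finset.univ.erase (1 : F)).image g)ᶜ = {τ} := by
    rw [← Finset.card_eq_one, Finset.card_compl, hcard]
    have : 0 < Fintype.card F := Fintype.card_pos
    omega
  have hsplit : ∀ f : F → F, ∑ v, f v = ∑ y ∈ Finset.univ.erase (1 : F), f (g y) + f τ := by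
    intro f
    rw [key, ← Finset.sum_add_sum_compl ((Finset.univ.erase (1 : F)).image g), hτ,
      Finset.sum_singleton]
  have hτ0 : τ = 0 := by
    have h1 := hsplit id
    have h2 := FiniteField.sum_pow_lt_card_sub_one F 1 (by omega)
    have h3 := Finset.sum_erase_add Finset.univ g (Finset.mem_univ (1 : F))
    rw [hg1, hsg, add_zero] at h3
    simp only [pow_one] at h2
    simp only [id] at h1
    rw [h2, h3, zero_add] at h1
    exact h1.symm
  have h1 := hsplit (fun v => v ^ n)
  rw [FiniteField.sum_pow_lt_card_sub_one F n hn, hτ0, zero_pow hn0.ne', add_zero] at h1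
  rw [← Finset.sum_erase_add Finset.univ _ (Finset.mem_univ (1 : F)), one_pow,
    CharTwo.add_self_eq_zero, zero_pow hn0.ne', zero_mul, add_zero, h1]
  refine Finset.sum_congr rfl fun y hy => ?_
  have hy : y ≠ 1 := by simpa using hy
  rw [← hgm, mul_pow, mul_assoc, ← pow_add, Nat.add_sub_cancel' hn.le,
    FiniteField.pow_card_sub_one_eq_one _ (hy1 y hy), mul_one]

theorem one_add_pow_sum (x : F) (S : Finset ℕ) :
    (1 + x) ^ (∑ i ∈ S, 2 ^ i) = ∑ I ∈ S.powerset, x ^ (∑ i ∈ I, 2 ^ i) := by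
  rw [← Finset.prod_pow_eq_pow_sum]
  simp_rw [add_pow_char_pow, one_pow, Finset.prod_one_add, Finset.prod_pow_eq_pow_sum]

theorem not_hyperoval (k e : ℕ) (hk0 : 0 < k) (hk : Even k) (hcard : Fintype.card F = 2 ^ e)
    (hkq : k ≤ Fintype.card F - 1)
    (H : ∀ x y z : F, x ≠ y → x ≠ z → y ≠ z →
      x * y ^ k + y * x ^ k + x * z ^ k + z * x ^ k + y * z ^ k + z * y ^ k ≠ 0)
    (S : Finset ℕ) : ∀ J : Finset ℕ, S ⊆ Finset.range e → J ⊆ Finset.range e → Disjoint S J →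
    S.Nonempty → S ≠ Finset.range e →
    ¬ (2 ^ e - 1 ∣ k * (∑ i ∈ S, 2 ^ i) + ∑ i ∈ J, 2 ^ i) := by
  induction S using Finset.strongInduction with
  | H S ih =>
  intro J hS hJ hd hne hnr hdvd
  have hfull : ∑ i ∈ Finset.range e, 2 ^ i = 2 ^ e - 1 := by
    have := Nat.geomSum_eq (le_refl 2) e
    simpa using this
  have hlt : ∀ T ⊂ Finset.range e, ∑ i ∈ T, 2 ^ i < 2 ^ e - 1 := by
    intro T hT
    rw [← hfull]
    obtain ⟨x, hx, hxT⟩ := Finset.exists_of_ssubset hT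
    exact Finset.sum_lt_sum_of_subset hT.1 hx hxT (by positivity) (fun _ _ _ => by positivity)
  have hSs : S ⊂ Finset.range e := lt_of_le_of_ne hS hnr
  have hpos : ∀ T : Finset ℕ, T.Nonempty → 0 < ∑ i ∈ T, 2 ^ i := fun T hT =>
    Finset.sum_pos (fun _ _ => by positivity) hT
  have hsum := hyperoval_sum k hk hkq H (∑ i ∈ S, 2 ^ i) (hpos S hne) (by rw [hcard]; exact hlt S hSs)
  set C := Finset.range e \ S with hC
  have hCsum : Fintype.card F - 1 - ∑ i ∈ S, 2 ^ i = ∑ i ∈ C, 2 ^ i := by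
    rw [hcard, ← hfull, ← Finset.sum_sdiff hS, Nat.add_sub_cancel]
  have hCs : ∀ T ⊆ C, T ⊂ Finset.range e := by
    intro T hT
    obtain ⟨x, hx⟩ := hne
    refine (Finset.ssubset_iff_of_subset (hT.trans Finset.sdiff_subset)).2 ⟨x, hS hx, fun h => ?_⟩
    exact (Finset.mem_sdiff.1 (hT h)).2 hx
  have hCd : ∀ T ⊆ C, Disjoint S T := by
    intro T hT
    exact Finset.disjoint_of_subset_right hT Finset.disjoint_sdiff
  rw [hCsum] at hsum
  simp_rw [one_add_pow_sum, ← pow_mul, Finset.sum_mul_sum, ← pow_add] at hsum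
  rw [Finset.sum_comm] at hsum
  have hJC : J ∈ C.powerset := by
    rw [Finset.mem_powerset]
    intro x hx
    exact Finset.mem_sdiff.2 ⟨hJ hx, fun h => Finset.disjoint_left.1 hd h hx⟩
  rw [Finset.sum_eq_single S] at hsum
  · rw [Finset.sum_comm, Finset.sum_eq_single J] at hsum
    · rw [sum_pow_eq_ite _ (Nat.add_pos_left (Nat.mul_pos hk0 (hpos S hne)) _), hcard,
        if_pos hdvd] at hsum
      exact one_ne_zero hsum
    · intro T hT hTJ
      rw [sum_pow_eq_ite _ (Nat.add_pos_left (Nat.mul_pos hk0 (hpos S hne)) _), hcard, if_neg]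
      intro hdvd2
      apply hTJ
      apply Finset.geomSum_injective (le_refl 2)
      have h1 := (Nat.modEq_zero_iff_dvd.2 hdvd2).trans (Nat.modEq_zero_iff_dvd.2 hdvd).symm
      exact (Nat.ModEq.add_left_cancel' _ h1).eq_of_lt_of_lt
        (hlt T (hCs T (Finset.mem_powerset.1 hT))) (hlt J (hCs J (Finset.mem_powerset.1 hJC)))
    · intro h; exact absurd hJC h
  · intro I hI hIS
    have hIS' : I ⊂ S := lt_of_le_of_ne (Finset.mem_powerset.1 hI) hIS
    rw [Finset.sum_comm]
    refine Finset.sum_eq_zero fun T hT => ?_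
    have hT := Finset.mem_powerset.1 hT
    rcases I.eq_empty_or_nonempty with rfl | hI0
    · rw [Finset.sum_empty, mul_zero, zero_add]
      exact FiniteField.sum_pow_lt_card_sub_one F _ (by rw [hcard]; exact hlt T (hCs T hT))
    · rw [sum_pow_eq_ite _ (Nat.add_pos_left (Nat.mul_pos hk0 (hpos I hI0)) _), hcard, if_neg]
      exact ih I hIS' T (hIS'.1.trans hS) (hCs T hT).1
        (Finset.disjoint_of_subset_left hIS'.1 (hCd T hT)) hI0 (hIS'.trans hSs).ne
  · intro h; exact absurd (Finset.mem_powerset_self S) h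

end FieldPart

/-- For a fixed even positive integer `k` with `k ≠ 6` and `k` not a power of 2,
the set of positive integers `e` such that
`x*y^k + y*x^k + x*z^k + z*x^k + y*z^k + z*y^k ≠ 0` for all pairwise distinct
`x y z ∈ GF(2^e)` (equivalently, `D(x^k)` is a hyperoval in `PG(2,2^e)`) is finite. -/
theorem monomial_hyperoval_finitely_many_fields
    (k : ℕ) (hk_even : Even k) (hk_pos : 0 < k) (hk6 : k ≠ 6)
    (hk2 : ∀ i : ℕ, k ≠ 2 ^ i) :
    {e : ℕ | 0 < e ∧ ∀ x y z : GaloisField 2 e, x ≠ y → x ≠ z → y ≠ z →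
      x * y ^ k + y * x ^ k + x * z ^ k + z * x ^ k + y * z ^ k + z * y ^ k ≠ 0}.Finite := by
  obtain ⟨m, rfl⟩ := hk_even.two_dvd
  obtain ⟨N, hN⟩ := walk_eventually m (by omega) (by omega)
    (fun i h => hk2 (i + 1) (by rw [h]; ring))
  refine (Set.finite_lt_nat (max N (2 * m))).subset ?_
  rintro e ⟨he, H⟩
  show e < _
  by_contra hlt
  rw [not_lt, max_le_iff] at hlt
  have hke : 2 * m < 2 ^ e := hlt.2.trans_lt Nat.lt_two_pow_self
  obtain ⟨S, J, hS, hJ, hd, heq⟩ := (hN e hlt.1).sets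
  classical
  haveI : Fintype (GaloisField 2 e) := Fintype.ofFinite _
  have hcard : Fintype.card (GaloisField 2 e) = 2 ^ e := by
    rw [← Nat.card_eq_fintype_card, GaloisField.card 2 e he.ne']
  have h2 : 2 ≤ 2 ^ e := by
    calc 2 = 2 ^ 1 := rfl
      _ ≤ 2 ^ e := Nat.pow_le_pow_right (by norm_num) he
  have hJlt : ∑ i ∈ J, 2 ^ i < 2 ^ e := Nat.geomSum_lt (le_refl 2) (fun i hi => by simpa using hJ hi)
  refine not_hyperoval (2 * m) e hk_pos hk_even hcard (by omega) H S J hS hJ hd ?_ ?_ ?_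
  · rw [Finset.nonempty_iff_ne_empty]
    rintro rfl
    simp at heq
    omega
  · rintro rfl
    have hJ0 : J = ∅ := by
      rw [← Finset.disjoint_self_iff_empty]
      exact Finset.disjoint_of_subset_left hJ hd
    have hfull : ∑ i ∈ Finset.range e, 2 ^ i = 2 ^ e - 1 := by
      have := Nat.geomSum_eq (le_refl 2) e
      simpa using this
    rw [hJ0, hfull] at heq
    simp at heq
    obtain ⟨Q, hQ⟩ : ∃ Q, 2 ^ e = Q + 1 := ⟨2 ^ e - 1, by omega⟩
    rw [hQ, Nat.add_sub_cancel] at heq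
    have : (m : ℕ) * Q = 1 * Q := by linarith
    have hm1 : m = 1 := Nat.eq_of_mul_eq_mul_right (by omega) this
    exact hk2 1 (by rw [hm1]; norm_num)
  · refine ⟨2, ?_⟩
    omega
end

section
/- Let k be an even positive integer and let g_k(x,y,z) ∈ 𝔽₂[x,y,z] be the homogeneous polynomial of degree k−2 with (x+y)(x+z)(y+z)·g_k(x,y,z) = x·y^k + y·x^k + x·z^k + z·x^k + y·z^k + z·y^k. If g_k(x,y,z) has a factor in 𝔽₂[x,y,z] that remains irreducible over the algebraic closure of 𝔽₂ (in particular, if g_k is itself absolutely irreducible), then D(x^k) is a hyperoval in PG(2, 2^e) for only finitely many positive integers e; equivalently, the set of e ≥ 1 such that x·y^k + y·x^k + x·z^k + z·x^k + y·z^k + z·y^k ≠ 0 for all pairwise distinct x, y, z ∈ GF(2^e) is finite. -/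
inductive Wk (n : ℕ) : ℕ → ℕ → ℕ → Prop
  | refl (c : ℕ) : Wk n 0 c c
  | dbl {l a c : ℕ} : Wk n l a c → 2 * c < n → Wk n (l + 1) a (2 * c)
  | dbl1 {l a c : ℕ} : Wk n l a c → 2 * c + 1 < n → Wk n (l + 1) a (2 * c + 1)
  | wrap {l a c : ℕ} : Wk n l a c → n < 2 * c → Wk n (l + 1) a (2 * c - n)

lemma Wk.trans {n l m a b c : ℕ} (h1 : Wk n l a b) (h2 : Wk n m b c) : Wk n (l + m) a c := by
  induction h2 with
  | refl c => exact h1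
  | dbl _ h ih => exact (ih h1).dbl h
  | dbl1 _ h ih => exact (ih h1).dbl1 h
  | wrap _ h ih => exact (ih h1).wrap h

lemma choose_odd_00 {d i : ℕ} (h : Odd ((d + i).choose i)) :
    Odd ((2 * d + (2 * i + 1)).choose (2 * i + 1)) := by
  have := @Choose.choose_modEq_choose_mod_mul_choose_div_nat (2 * d + (2 * i + 1)) (2 * i + 1) 2 _
  rw [show (2 * d + (2 * i + 1)) % 2 = 1 by omega, show (2 * i + 1) % 2 = 1 by omega,
    show (2 * d + (2 * i + 1)) / 2 = d + i by omega, show (2 * i + 1) / 2 = i by omega] at this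
  rw [Nat.odd_iff] at *
  simpa [Nat.ModEq, h] using this

lemma choose_odd_01 {d i : ℕ} (h : Odd ((d + i).choose i)) :
    Odd ((2 * d + 2 * i).choose (2 * i)) := by
  have := @Choose.choose_modEq_choose_mod_mul_choose_div_nat (2 * d + 2 * i) (2 * i) 2 _
  rw [show (2 * d + 2 * i) % 2 = 0 by omega, show (2 * i) % 2 = 0 by omega,
    show (2 * d + 2 * i) / 2 = d + i by omega, show (2 * i) / 2 = i by omega] at this
  rw [Nat.odd_iff] at *
  simpa [Nat.ModEq, h] using this

lemma choose_odd_11 {d i : ℕ} (h : Odd ((d + i).choose i)) :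
    Odd (((2 * d + 1) + 2 * i).choose (2 * i)) := by
  have := @Choose.choose_modEq_choose_mod_mul_choose_div_nat ((2 * d + 1) + 2 * i) (2 * i) 2 _
  rw [show ((2 * d + 1) + 2 * i) % 2 = 1 by omega, show (2 * i) % 2 = 0 by omega,
    show ((2 * d + 1) + 2 * i) / 2 = d + i by omega, show (2 * i) / 2 = i by omega] at this
  rw [Nat.odd_iff] at *
  simpa [Nat.ModEq, h] using this

/-- Bit data carried along a walk. -/
lemma Wk.data {n l a c : ℕ} (h : Wk n l a c) (l0 c0 d0 i0 : ℕ)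
    (h0 : 2 ^ l0 * (c0 + 1) = a + 1 + (n + 1) * d0 + i0) (h1 : Odd ((d0 + i0).choose i0))
    (h2 : d0 + i0 < 2 ^ l0) (h3 : 0 < i0) :
    ∃ d i, 2 ^ (l0 + l) * (c0 + 1) = c + 1 + (n + 1) * d + i ∧ Odd ((d + i).choose i) ∧
      d + i < 2 ^ (l0 + l) ∧ 0 < i := by
  induction h with
  | refl c => exact ⟨d0, i0, h0, h1, h2, h3⟩
  | @dbl l a c _ h ih =>
    obtain ⟨d, i, e1, e2, e3, e4⟩ := ih h0
    refine ⟨2 * d, 2 * i + 1, ?_, choose_odd_00 e2, ?_, by omega⟩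
    · rw [← add_assoc, pow_succ]; linarith
    · rw [← add_assoc l0 l 1, pow_succ]; omega
  | @dbl1 l a c _ h ih =>
    obtain ⟨d, i, e1, e2, e3, e4⟩ := ih h0
    refine ⟨2 * d, 2 * i, ?_, choose_odd_01 e2, ?_, by omega⟩
    · rw [← add_assoc, pow_succ]; linarith
    · rw [← add_assoc, pow_succ]; omega
  | @wrap l a c _ h ih =>
    obtain ⟨d, i, e1, e2, e3, e4⟩ := ih h0
    refine ⟨2 * d + 1, 2 * i, ?_, choose_odd_11 e2, ?_, by omega⟩
    · obtain ⟨r, hr⟩ : ∃ r, 2 * c = n + r := ⟨2 * c - n, by omega⟩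
      rw [hr, Nat.add_sub_cancel_left, ← add_assoc, pow_succ]; linarith
    · rw [← add_assoc, pow_succ]; omega

lemma Wk.step {n t : ℕ} (hn : Odd n) (ht : t < n) : Wk n 1 t (2 * t % n) := by
  obtain ⟨s, rfl⟩ := hn
  rcases lt_or_ge (2 * t) (2 * s + 1) with h | h
  · rw [Nat.mod_eq_of_lt h]; exact (Wk.refl t).dbl h
  · rw [Nat.mod_eq_sub_mod h, Nat.mod_eq_of_lt (by omega)]; exact (Wk.refl t).wrap (by omega)

lemma cop_pow {n : ℕ} (hn : Odd n) (l : ℕ) : Nat.Coprime n (2 ^ l) :=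
  Nat.Coprime.pow_right _ (Nat.coprime_two_right.mpr hn)

lemma mul_pow_mod_pos {n t : ℕ} (hn : Odd n) (ht : t < n) (ht0 : 0 < t) (l : ℕ) :
    0 < 2 ^ l * t % n := by
  rw [Nat.pos_iff_ne_zero]
  intro h
  have := (cop_pow hn l).dvd_of_dvd_mul_left (Nat.dvd_of_mod_eq_zero h)
  exact absurd (Nat.le_of_dvd ht0 this) (by omega)

lemma Wk.pow {n t : ℕ} (hn : Odd n) (ht : t < n) (ht0 : 0 < t) (l : ℕ) :
    Wk n l t (2 ^ l * t % n) := by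
  induction l with
  | zero => rw [pow_zero, one_mul, Nat.mod_eq_of_lt ht]; exact .refl t
  | succ l ih =>
    have h := Wk.step hn (Nat.mod_lt (2 ^ l * t) (by omega))
    have h2 := ih.trans h
    rwa [Nat.mul_mod, Nat.mod_mod, ← Nat.mul_mod, ← mul_assoc, ← pow_succ'] at h2

/-- inverse doubling -/
lemma Wk.back {n t : ℕ} (hn : Odd n) (ht : t < n) (ht0 : 0 < t) (l : ℕ) :
    ∃ m, Wk n m (2 ^ l * t % n) t := by
  have hn0 : 0 < n := by omega
  refine ⟨l * (n.totient - 1), ?_⟩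
  have h := Wk.pow hn (Nat.mod_lt (2 ^ l * t) hn0) (mul_pow_mod_pos hn ht ht0 l)
    (l * (n.totient - 1))
  convert h using 1
  have h1 : 2 ^ (l * n.totient) ≡ 1 [MOD n] := by
    rw [pow_mul]; exact Nat.ModEq.pow_totient (cop_pow hn l).symm
  have hpos : 0 < n.totient := Nat.totient_pos.mpr hn0
  have h2 : 2 ^ (l * (n.totient - 1)) * (2 ^ l * t % n) ≡ t [MOD n] := by
    calc 2 ^ (l * (n.totient - 1)) * (2 ^ l * t % n)
        ≡ 2 ^ (l * (n.totient - 1)) * (2 ^ l * t) [MOD n] :=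
          Nat.ModEq.mul_left _ (Nat.mod_modEq _ _)
      _ = 2 ^ (l * n.totient) * t := by
          rw [← mul_assoc, ← pow_add]
          congr 2
          obtain ⟨s, hs⟩ : ∃ s, n.totient = s + 1 := ⟨n.totient - 1, by omega⟩
          rw [hs, Nat.add_sub_cancel]; ring
      _ ≡ 1 * t [MOD n] := h1.mul_right _
      _ = t := one_mul _
  unfold Nat.ModEq at h2
  rw [h2, Nat.mod_eq_of_lt ht]

lemma Wk.half {n t : ℕ} (ht : t < n) : Wk n 1 (t / 2) t := by
  rcases Nat.even_or_odd' t with ⟨s, rfl | rfl⟩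
  · have := (Wk.refl (n := n) s).dbl ht
    rwa [show 2 * s / 2 = s by omega]
  · have := (Wk.refl (n := n) s).dbl1 ht
    rwa [show (2 * s + 1) / 2 = s by omega]

lemma Wk.ofTop {n t : ℕ} (ht : t < n) (j : ℕ) : Wk n j (t / 2 ^ j) t := by
  induction j with
  | zero => simpa using Wk.refl t
  | succ j ih =>
    have h := Wk.half (n := n) (t := t / 2 ^ j) (lt_of_le_of_lt (Nat.div_le_self _ _) ht)
    rw [Nat.div_div_eq_div_mul, ← pow_succ] at h
    have := h.trans ih
    rwa [add_comm] at this

lemma Wk.log {n t : ℕ} (ht : t < n) (ht0 : 0 < t) : Wk n (Nat.log 2 t) 1 t := by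
  have := Wk.ofTop ht (Nat.log 2 t)
  rwa [Nat.div_eq_of_lt_le (k := 1) (by simpa using Nat.pow_log_le_self 2 ht0.ne')
    (by have := Nat.lt_pow_succ_log_self (b := 2) (by norm_num) t; rw [pow_succ'] at this; simpa using this)] at this

lemma Wk.rel {n p t l1 l2 l3 : ℕ} (hp : ∀ l, Wk n l 1 1 → p ∣ l) (h1 : Wk n l1 1 t)
    (h2 : Wk n l2 1 t) (h3 : Wk n l3 t 1) : (p : ℤ) ∣ l1 - l2 := by
  have a := Int.natCast_dvd_natCast.mpr (hp _ (h1.trans h3))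
  have b := Int.natCast_dvd_natCast.mpr (hp _ (h2.trans h3))
  have := dvd_sub a b
  push_cast at this
  simpa using this

lemma Wk.oddrel {n p t l3 : ℕ} (hn : Odd n) (hp : ∀ l, Wk n l 1 1 → p ∣ l) (ht : t < n)
    (hodd : Odd t) (h3 : Wk n l3 t 1) : (p : ℤ) ∣ Nat.log 2 (t + n) - Nat.log 2 t := by
  obtain ⟨a, rfl⟩ := hn
  obtain ⟨b, rfl⟩ := hodd
  refine Wk.rel hp ?_ (Wk.log ht (by omega)) h3
  have h := (Wk.log (n := 2 * a + 1) (t := a + b + 1) (by omega) (by omega)).wrap (by omega)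
  rw [show 2 * (a + b + 1) - (2 * a + 1) = 2 * b + 1 by omega] at h
  rwa [show 2 * b + 1 + (2 * a + 1) = (a + b + 1) * 2 by ring, Nat.log_mul_base (by norm_num) (by omega)]

lemma Wk.gcd_one {n p : ℕ} (hn : Odd n) (h5 : n ≠ 5) (h2 : ∀ i, n + 1 ≠ 2 ^ i)
    (hp : ∀ l, Wk n l 1 1 → p ∣ l) : p = 1 := by
  obtain ⟨L, hL1, hL2⟩ : ∃ L, 2 ^ L ≤ n ∧ n < 2 ^ (L + 1) :=
    ⟨Nat.log 2 n, Nat.pow_log_le_self 2 (by rintro rfl; simp at hn),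
      Nat.lt_pow_succ_log_self (by norm_num) n⟩
  have hL0 : 2 ≤ L := by
    by_contra hlt
    have : L = 0 ∨ L = 1 := by omega
    rcases this with rfl | rfl
    · exact h2 1 (by norm_num at *; omega)
    · obtain ⟨s, hs⟩ := hn
      exact h2 2 (by norm_num at *; omega)
  have hne : n + 1 ≠ 2 ^ (L + 1) := h2 _
  have hdvd1 : (p : ℤ) ∣ 1 → p = 1 := fun h => by
    have := Int.natCast_dvd_natCast.mp (by simpa using h : (p : ℤ) ∣ (1 : ℕ)); exact Nat.dvd_one.mp this
  obtain ⟨M, rfl⟩ : ∃ M, L = M + 2 := ⟨L - 2, by omega⟩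
  set Q := 2 ^ M with hQ
  have e1 : 2 ^ (M + 2) = 4 * Q := by rw [hQ]; ring
  have e2 : 2 ^ (M + 2 + 1) = 8 * Q := by rw [hQ]; ring
  have e3 : 2 ^ (M + 1) = 2 * Q := by rw [hQ]; ring
  have e4 : 2 ^ (M + 2 + 1 + 1) = 16 * Q := by rw [hQ]; ring
  have hQ0 : 0 < Q := by positivity
  rw [e1] at hL1
  rw [e2] at hL2 hne
  obtain ⟨s, hs⟩ := id hn
  have lg : ∀ (t e : ℕ), 2 ^ e ≤ t → t < 2 ^ (e + 1) → Nat.log 2 t = e :=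
    fun t e h1 h2 => Nat.log_eq_of_pow_le_of_lt_pow h1 h2
  -- closure of the set of vertices leading to `1`
  have A1 : ∃ l, Wk n l 1 1 := ⟨0, .refl 1⟩
  have Apre : ∀ t, t < n → (∃ l, Wk n l t 1) → ∀ j, ∃ l, Wk n l (t / 2 ^ j) 1 :=
    fun t ht ⟨l, h⟩ j => ⟨_, (Wk.ofTop ht j).trans h⟩
  have Apow : ∀ t, t < n → 0 < t → (∃ l, Wk n l t 1) → ∀ j, ∃ l, Wk n l (2 ^ j * t % n) 1 :=
    fun t ht ht0 ⟨l, h⟩ j => by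
      obtain ⟨m, hm⟩ := Wk.back hn ht ht0 j
      exact ⟨_, hm.trans h⟩
  have Ahalf : ∃ l, Wk n l (s + 1) 1 := by
    have := (Wk.refl (n := n) (s + 1)).wrap (by omega)
    rw [show 2 * (s + 1) - n = 1 by omega] at this
    exact ⟨_, this⟩
  have Av : ∃ l, Wk n l (8 * Q - n) 1 := by
    have := Apow 1 (by omega) (by omega) A1 (M + 2 + 1)
    rwa [e2, mul_one, Nat.mod_eq_sub_mod (by omega), Nat.mod_eq_of_lt (by omega)] at this
  have R : ∀ t, t < n → Odd t → (∃ l, Wk n l t 1) →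
      (p : ℤ) ∣ Nat.log 2 (t + n) - Nat.log 2 t := fun t ht ho ⟨l, h⟩ => Wk.oddrel hn hp ht ho h
  have RL : (p : ℤ) ∣ (M : ℤ) + 2 := by
    have := R 1 (by omega) odd_one A1
    rw [lg (1 + n) (M + 2) (by omega) (by omega)] at this
    simpa using this
  have Rlo : ∀ t, t < n → Odd t → (∃ l, Wk n l t 1) → t < 8 * Q - n → (p : ℤ) ∣ Nat.log 2 t := by
    intro t ht ho h hlt
    have := R t ht ho h
    rw [lg (t + n) (M + 2) (by omega) (by omega)] at this
    push_cast at this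
    have := dvd_sub RL this
    simpa using this
  have Rhi : ∀ t, t < n → Odd t → (∃ l, Wk n l t 1) → 8 * Q - n ≤ t →
      (p : ℤ) ∣ Nat.log 2 t - 1 := by
    intro t ht ho h hlt
    have := R t ht ho h
    rw [lg (t + n) (M + 2 + 1) (by omega) (by omega)] at this
    push_cast at this
    obtain ⟨u, hu⟩ := RL
    obtain ⟨w, hw⟩ := this
    exact ⟨u - w, by linarith⟩
  by_cases hv3 : 8 * Q - n = 3
  · -- n = 2^(L+1) - 3
    have hM : 1 ≤ M := by
      by_contra h
      have : M = 0 := by omega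
      subst this
      simp at hQ
      omega
    obtain ⟨M', rfl⟩ : ∃ M', M = M' + 1 := ⟨M - 1, by omega⟩
    have hQ' : Q = 2 * 2 ^ M' := by rw [hQ]; ring
    have h7 := Apre (s + 1) (by omega) Ahalf M'
    have hP0 : 0 < 2 ^ M' := by positivity
    rw [show (s + 1) / 2 ^ M' = 7 from Nat.div_eq_of_lt_le (by omega) (by omega)] at h7
    have := Rhi 7 (by omega) (by decide) h7 (by omega)
    rw [lg 7 2 (by norm_num) (by norm_num)] at this
    exact hdvd1 (by simpa using this)
  · have hv5 : 5 ≤ 8 * Q - n := by omega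
    by_cases h3 : ∃ l, Wk n l 3 1
    · have := Rlo 3 (by omega) (by decide) h3 (by omega)
      rw [lg 3 1 (by norm_num) (by norm_num)] at this
      exact hdvd1 (by simpa using this)
    · apply hdvd1
      have N1 : s + 1 < 3 * Q := by
        by_contra hge
        apply h3
        have := Apre (s + 1) (by omega) Ahalf M
        rwa [show (s + 1) / 2 ^ M = 3 from Nat.div_eq_of_lt_le (by omega) (by omega)] at this
      have N2 : 8 * Q - n < 3 * Q := by
        by_contra hge
        apply h3
        have := Apre (8 * Q - n) (by omega) Av M
        rwa [show (8 * Q - n) / 2 ^ M = 3 from Nat.div_eq_of_lt_le (by omega) (by omega)] at this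
      have hM : 1 ≤ M := by
        by_contra h
        have : M = 0 := by omega
        subst this
        simp at hQ
        omega
      obtain ⟨M', rfl⟩ : ∃ M', M = M' + 1 := ⟨M - 1, by omega⟩
      have hQ' : Q = 2 * 2 ^ M' := by rw [hQ]; ring
      have hP0 : 0 < 2 ^ M' := by positivity
      have A5 := Apre (s + 1) (by omega) Ahalf M'
      rw [show (s + 1) / 2 ^ M' = 5 from Nat.div_eq_of_lt_le (by omega) (by omega)] at A5
      have At := Apow 5 (by omega) (by omega) A5 (M' + 1 + 1)
      rw [e3, Nat.mod_eq_sub_mod (by omega), Nat.mod_eq_of_lt (by omega)] at At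
      have := Rhi (2 * Q * 5 - n) (by omega) (by rw [Nat.odd_iff]; omega) At (by omega)
      rw [lg (2 * Q * 5 - n) (M' + 1 + 2) (by omega) (by omega)] at this
      push_cast at this
      obtain ⟨u, hu⟩ := RL
      obtain ⟨w, hw⟩ := this
      push_cast at hu
      exact ⟨u - w, by linarith⟩

lemma Wk.large {n : ℕ} (hn : Odd n) (h5 : n ≠ 5) (h2 : ∀ i, n + 1 ≠ 2 ^ i) :
    ∃ E, ∀ e ≥ E, ∃ d i, (2 ^ e - 1) ∣ (n + 1) * d + i ∧ Odd ((d + i).choose i) ∧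
      d + i ≤ 2 ^ e - 1 ∧ 0 < i ∧ i < 2 ^ e - 1 := by
  have hn2 : 2 < n := by
    obtain ⟨s, hs⟩ := hn
    by_contra h
    exact h2 1 (by omega)
  obtain ⟨N, hN⟩ := Nat.exists_mem_closure_of_ge {l | Wk n l 1 1}
  have hg : Nat.setGcd {l | Wk n l 1 1} = 1 :=
    Wk.gcd_one hn h5 h2 fun l hl => Nat.setGcd_dvd_of_mem hl
  have hcl : ∀ m, m ∈ AddSubmonoid.closure {l | Wk n l 1 1} → Wk n m 1 1 := fun m hm =>
    AddSubmonoid.closure_le (S := ⟨⟨{l | Wk n l 1 1}, fun h1 h2 => Wk.trans h1 h2⟩, Wk.refl 1⟩) |>.mpr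
      (fun _ h => h) hm
  obtain ⟨m, hm⟩ := Wk.back (t := 1) hn (by omega) (by omega) 1
  rw [pow_one, mul_one, Nat.mod_eq_of_lt hn2] at hm
  refine ⟨N + m + 1, fun e he => ?_⟩
  have hw := hm.trans (hcl (e - m - 1) (hN _ (by omega) (by rw [hg]; exact one_dvd _)))
  obtain ⟨d, i, q1, q2, q3, q4⟩ := hw.data 1 1 0 1 (by norm_num) (by simp) (by norm_num) (by norm_num)
  rw [show 1 + (m + (e - m - 1)) = e by omega] at q1 q3
  have hpos : 2 ≤ 2 ^ e := by
    calc 2 = 2 ^ 1 := rfl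
      _ ≤ 2 ^ e := Nat.pow_le_pow_right (by norm_num) (by omega)
  refine ⟨d, i, ⟨2, by omega⟩, q2, by omega, q4, ?_⟩
  by_contra hge
  have hd : d = 0 := by omega
  subst hd
  omega


lemma sum_pow_field {F : Type*} [Field F] [Fintype F] (j : ℕ) (hj : 0 < j) :
    ∑ x : F, x ^ j = if Fintype.card F - 1 ∣ j then -1 else 0 := by
  classical
  rw [← FiniteField.sum_pow_units F j]
  rw [← Finset.sum_subset (Finset.subset_univ (Finset.univ \ {(0 : F)}))]
  · let φ : Fˣ ↪ F := ⟨fun x ↦ x, Units.val_injective⟩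
    have : Finset.univ.map φ = Finset.univ \ {0} := by
      ext x
      simp only [Finset.mem_map, Finset.mem_univ, Function.Embedding.coeFn_mk, true_and,
        Finset.mem_sdiff, Finset.mem_singleton, φ]
      exact isUnit_iff_ne_zero
    rw [← this, Finset.sum_map]
    rfl
  · intro x _ hx
    have : x = 0 := by simpa using hx
    rw [this, zero_pow hj.ne']

/-- In a hyperoval with `q - 1 > k`, every nonzero slope is attained exactly once at each point. -/
lemma slope_unique {F : Type*} [Field F] [Fintype F] [CharP F 2] (k : ℕ) (hke : Even k)
    (hk : 0 < k) (hkq : k < Fintype.card F)  (hq : 3 ≤ Fintype.card F)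
    (H : ∀ x y z : F, x ≠ y → x ≠ z → y ≠ z →
      x * y ^ k + y * x ^ k + x * z ^ k + z * x ^ k + y * z ^ k + z * y ^ k ≠ 0)
    (x m : F) (hm : m ≠ 0) : ∃ y, y ≠ x ∧ y ^ k + m * y = x ^ k + m * x := by
  classical
  have c2 : (2 : F) = 0 := CharTwo.two_eq_zero
  let s : F → F := fun y => ∑ j ∈ Finset.range k, y ^ j * x ^ (k - 1 - j)
  have hs : ∀ y, s y * (y - x) = y ^ k - x ^ k := fun y => (Commute.all y x).geom_sum₂_mul k
  have hsx : s x = 0 := by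
    have : s x = k * x ^ (k - 1) := by
      simp only [s]
      rw [Finset.sum_congr rfl (g := fun _ => x ^ (k - 1))]
      · simp
      · intro j hj
        have := Finset.mem_range.mp hj
        rw [← pow_add]; congr 1; omega
    rw [this]
    obtain ⟨r, rfl⟩ := hke
    push_cast
    linear_combination (r * x ^ (r + r - 1) : F) * c2
  have hsum : ∑ y, s y = 0 := by
    simp only [s]
    rw [Finset.sum_comm]
    refine Finset.sum_eq_zero fun j hj => ?_
    have := Finset.mem_range.mp hj
    rw [← Finset.sum_mul, FiniteField.sum_pow_lt_card_sub_one F j (by omega), zero_mul]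
  have hid : ∑ y : F, y = 0 := by
    have := FiniteField.sum_pow_lt_card_sub_one F 1 (by omega)
    simpa using this
  have hinj : Set.InjOn s ((Finset.univ.erase x : Finset F) : Set F) := by
    intro y hy z hz hyz
    have hy' : y ≠ x := by simpa using hy
    have hz' : z ≠ x := by simpa using hz
    by_contra hne
    refine H x y z hy'.symm hz'.symm hne ?_
    have h1 := hs y
    have h2 := hs z
    rw [← hyz] at h2
    have h1' : y ^ k = x ^ k + s y * (y - x) := by rw [h1]; ring
    have h2' : z ^ k = x ^ k + s y * (z - x) := by rw [h2]; ring
    rw [h1', h2']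
    linear_combination (x*x^k - s y * x * x + y * x^k + z * x^k + s y * y * z
       - s y * x * 0 + 0) * c2
  have hcard : ((Finset.univ.erase x).image s).card = Fintype.card F - 1 := by
    rw [Finset.card_image_of_injOn hinj, Finset.card_erase_of_mem (Finset.mem_univ _), Finset.card_univ]
  have hcompl : (((Finset.univ.erase x).image s)ᶜ).card = 1 := by
    rw [Finset.card_compl, hcard]; omega
  obtain ⟨n, hn⟩ := Finset.card_eq_one.mp hcompl
  have hn0 : n = 0 := by
    have h1 := Finset.sum_add_sum_compl ((Finset.univ.erase x).image s) (fun u => u)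
    rw [hn, hid, Finset.sum_singleton, Finset.sum_image hinj] at h1
    have h2 := Finset.add_sum_erase Finset.univ s (Finset.mem_univ x)
    rw [hsum, hsx, zero_add] at h2
    rwa [h2, zero_add] at h1
  have hmem : m ∈ (Finset.univ.erase x).image s := by
    by_contra h
    have : m ∈ ((Finset.univ.erase x).image s)ᶜ := Finset.mem_compl.mpr h
    rw [hn, Finset.mem_singleton, hn0] at this
    exact hm this
  obtain ⟨y, hy, hym⟩ := Finset.mem_image.mp hmem
  refine ⟨y, by simpa using hy, ?_⟩
  have := hs y
  rw [hym] at this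
  linear_combination (-1 : F) * this + (m * y - m * x) * c2

lemma partB {F : Type*} [Field F] [Fintype F] [CharP F 2] (k : ℕ) (hke : Even k)
    (hk : 0 < k) (hkq : k < Fintype.card F)  (hq : 3 ≤ Fintype.card F)
    (H : ∀ x y z : F, x ≠ y → x ≠ z → y ≠ z →
      x * y ^ k + y * x ^ k + x * z ^ k + z * x ^ k + y * z ^ k + z * y ^ k ≠ 0)
    (d i : ℕ) (hdvd : Fintype.card F - 1 ∣ k * d + i) (hodd : Odd ((d + i).choose i))
    (hle : d + i ≤ Fintype.card F - 1) (hi : 0 < i) (hi2 : i < Fintype.card F - 1) : False := by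
  classical
  have c2 : (2 : F) = 0 := CharTwo.two_eq_zero
  set q := Fintype.card F with hqdef
  choose! g hg1 hg2 using slope_unique k hke hk hkq hq H
  have huniq : ∀ x y z m : F, x ≠ y → x ≠ z → y ^ k + m * y = x ^ k + m * x →
      z ^ k + m * z = x ^ k + m * x → y = z := by
    intro x y z m hxy hxz h1 h2
    by_contra hne
    refine H x y z hxy hxz hne ?_
    linear_combination (x + z) * h1 + (x + y) * h2 + (y * x ^ k + z * x ^ k + x * x ^ k + x ^ 2 * m - y * z * m) * c2
  have hpair : ∀ m : F, m ≠ 0 → ∑ x : F, (m * x + x ^ k) ^ (d + i) = 0 := by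
    intro m hm
    refine Finset.sum_involution (fun x _ => g x m) ?_ ?_ (fun _ _ => Finset.mem_univ _) ?_
    · intro x _
      have := hg2 x m hm
      rw [show m * g x m + g x m ^ k = m * x + x ^ k by linear_combination this]
      linear_combination (m * x + x ^ k) ^ (d + i) * c2
    · intro x _ _
      exact hg1 x m hm
    · intro x _
      exact huniq (g x m) _ _ m (hg1 (g x m) m hm).symm (hg1 x m hm)
        (hg2 (g x m) m hm) (hg2 x m hm).symm
  have hW : ∑ m : F, m ^ (q - 1 - i) * ∑ x : F, (m * x + x ^ k) ^ (d + i) = 0 := by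
    refine Finset.sum_eq_zero fun m _ => ?_
    by_cases hm : m = 0
    · rw [hm, zero_pow (by omega), zero_mul]
    · rw [hpair m hm, mul_zero]
  have hexp : ∑ m : F, m ^ (q - 1 - i) * ∑ x : F, (m * x + x ^ k) ^ (d + i) =
      ∑ j ∈ Finset.range (d + i + 1), ((d + i).choose j : F) *
        (∑ m : F, m ^ (q - 1 - i + j)) * ∑ x : F, x ^ (j + k * (d + i - j)) := by
    simp_rw [add_pow, Finset.mul_sum]
    rw [Finset.sum_congr rfl (fun m _ => Finset.sum_comm), Finset.sum_comm]
    refine Finset.sum_congr rfl fun j _ => ?_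
    rw [Finset.sum_comm]
    refine Finset.sum_congr rfl fun x _ => ?_
    rw [Finset.sum_mul]
    refine Finset.sum_congr rfl fun m _ => ?_
    rw [mul_pow, pow_add, pow_add, pow_mul]
    ring
  rw [hexp, Finset.sum_eq_single i] at hW
  · rw [sum_pow_field _ (by omega), sum_pow_field _ (by omega), if_pos, if_pos] at hW
    · obtain ⟨r, hr⟩ := hodd
      rw [hr] at hW
      push_cast at hW
      exact one_ne_zero (α := F) (by linear_combination hW - r * c2)
    · rw [Nat.add_sub_cancel, add_comm]; exact hdvd
    · rw [show q - 1 - i + i = q - 1 by omega]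
  · intro j hj hji
    have hj' := Finset.mem_range.mp hj
    rw [sum_pow_field _ (by omega), if_neg, mul_zero, zero_mul]
    rintro ⟨r, hr⟩
    rcases r with _ | _ | r
    · omega
    · omega
    · have : (q - 1) * (r + 1 + 1) = (q - 1) * r + 2 * (q - 1) := by ring
      have h0 : 0 ≤ (q - 1) * r := Nat.zero_le _
      rw [← hqdef] at hr
      omega
  · intro h
    exact absurd (Finset.mem_range.mpr (by omega)) h

open MvPolynomial


lemma lin_dvd {K : Type*} [Field K] {H a b : MvPolynomial (Fin 3) K} (hH : Irreducible H)
    (ha : a ≠ 0) (hdeg : a.totalDegree ≤ 1) (h1 : H ∣ a) (h2 : H ∣ b) : a ∣ b := by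
  refine dvd_trans ?_ h2
  obtain ⟨u, hu⟩ := h1
  have hH0 : H ≠ 0 := hH.ne_zero
  have hu0 : u ≠ 0 := by rintro rfl; simp at hu; exact ha hu
  rw [hu, totalDegree_mul_of_isDomain hH0 hu0] at hdeg
  have hHd : H.totalDegree ≠ 0 := by
    intro h0
    rw [totalDegree_eq_zero_iff_eq_C] at h0
    apply hH.not_isUnit
    rw [h0]
    refine (isUnit_iff_ne_zero.mpr ?_).map C
    intro hc
    rw [hc, C_0] at h0
    exact hH0 h0
  have hud : u.totalDegree = 0 := by omega
  rw [totalDegree_eq_zero_iff_eq_C] at hud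
  have hunit : IsUnit u := by
    rw [hud]
    refine (isUnit_iff_ne_zero.mpr ?_).map C
    intro hc
    rw [hc, C_0] at hud
    exact hu0 hud
  rw [hu]
  exact (hunit.dvd_mul_right.mp (dvd_refl _) : _) 

abbrev KK := AlgebraicClosure (ZMod 2)

lemma map_frob (h : MvPolynomial (Fin 3) (ZMod 2)) :
    MvPolynomial.map (frobenius KK 2) (MvPolynomial.map (algebraMap (ZMod 2) KK) h) =
      MvPolynomial.map (algebraMap (ZMod 2) KK) h := by
  rw [MvPolynomial.map_map]
  congr 2
  exact Subsingleton.elim _ _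

lemma not_both {H : MvPolynomial (Fin 3) KK} (hH : Irreducible H) (h1 : H ∣ X 0 + X 2)
    (h2 : H ∣ X 1 + X 2) : False := by
  have hd : (X 0 + X 2 : MvPolynomial (Fin 3) KK).totalDegree ≤ 1 := by
    refine (totalDegree_add _ _).trans ?_
    simp [totalDegree_X]
  have h0 : (X 0 + X 2 : MvPolynomial (Fin 3) KK) ≠ 0 := by
    intro h
    have := congrArg (eval ![1, 0, 0]) h
    simp at this
  obtain ⟨u, hu⟩ := lin_dvd hH h0 hd h1 h2
  have := congrArg (eval ![0, 1, 0]) hu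
  simp at this

lemma not_e12 {H : MvPolynomial (Fin 3) KK} (hH : Irreducible H) (h1 : H ∣ X 0 + X 1 + X 2)
    (h2 : H ∣ X 0 * X 1 + X 0 * X 2 + X 1 * X 2) : False := by
  have hd : (X 0 + X 1 + X 2 : MvPolynomial (Fin 3) KK).totalDegree ≤ 1 := by
    refine (totalDegree_add _ _).trans (max_le ((totalDegree_add _ _).trans ?_) ?_)
    all_goals simp [totalDegree_X]
  have h0 : (X 0 + X 1 + X 2 : MvPolynomial (Fin 3) KK) ≠ 0 := by
    intro h
    have := congrArg (eval ![1, 0, 0]) h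
    simp at this
  obtain ⟨u, hu⟩ := lin_dvd hH h0 hd h1 h2
  have := congrArg (eval ![1, 1, 0]) hu
  simp [CharTwo.add_self_eq_zero] at this

lemma caseSix (g h : MvPolynomial (Fin 3) (ZMod 2))
    (hg : (X 0 + X 1) * (X 0 + X 2) * (X 1 + X 2) * g =
        X 0 * X 1 ^ 6 + X 1 * X 0 ^ 6 + X 0 * X 2 ^ 6 + X 2 * X 0 ^ 6 +
          X 1 * X 2 ^ 6 + X 2 * X 1 ^ 6)
    (hh : h ∣ g) (hirr : Irreducible (MvPolynomial.map (algebraMap (ZMod 2) KK) h)) : False := by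
  set H := MvPolynomial.map (algebraMap (ZMod 2) KK) h with hHdef
  have c2 : (2 : MvPolynomial (Fin 3) KK) = 0 := CharTwo.two_eq_zero
  have c2' : (2 : MvPolynomial (Fin 3) (ZMod 2)) = 0 := CharTwo.two_eq_zero
  have hfrob : MvPolynomial.map (frobenius KK 2) H = H := map_frob h
  let e1 : MvPolynomial (Fin 3) (ZMod 2) := X 0 + X 1 + X 2
  let e2 : MvPolynomial (Fin 3) (ZMod 2) := X 0 * X 1 + X 0 * X 2 + X 1 * X 2
  have hne : ∀ i j : Fin 3, i ≠ j → (X i + X j : MvPolynomial (Fin 3) (ZMod 2)) ≠ 0 := by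
    intro i j hij h
    have := congrArg (eval (Pi.single i 1)) h
    simp [hij.symm] at this
  have hg' : g = e1 ^ 4 + e1 ^ 2 * e2 + e2 ^ 2 := by
    apply mul_left_cancel₀ (mul_ne_zero (mul_ne_zero (hne 0 1 (by decide)) (hne 0 2 (by decide)))
      (hne 1 2 (by decide)))
    rw [hg]
    simp only [e1, e2]
    generalize (X 0 : MvPolynomial (Fin 3) (ZMod 2)) = x
    generalize (X 1 : MvPolynomial (Fin 3) (ZMod 2)) = y
    generalize (X 2 : MvPolynomial (Fin 3) (ZMod 2)) = z
    linear_combination ((-3) * x ^ 5 * y ^ 2 * z ^ 0 + (-6) * x ^ 5 * y ^ 1 * z ^ 1 + (-7) * x ^ 4 * y ^ 3 * z ^ 0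
      + (-22) * x ^ 4 * y ^ 2 * z ^ 1 + (-22) * x ^ 4 * y ^ 1 * z ^ 2 + (-7) * x ^ 3 * y ^
      4 * z ^ 0 + (-33) * x ^ 3 * y ^ 3 * z ^ 1 + (-52) * x ^ 3 * y ^ 2 * z ^ 2 + (-33) *
      x ^ 3 * y ^ 1 * z ^ 3 + (-3) * x ^ 2 * y ^ 5 * z ^ 0 + (-22) * x ^ 2 * y ^ 4 * z ^ 1
      + (-52) * x ^ 2 * y ^ 3 * z ^ 2 + (-52) * x ^ 2 * y ^ 2 * z ^ 3 + (-22) * x ^ 2 * y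
      ^ 1 * z ^ 4 + (-3) * x ^ 5 * y ^ 0 * z ^ 2 + (-7) * x ^ 4 * y ^ 0 * z ^ 3 + (-7) * x
      ^ 3 * y ^ 0 * z ^ 4 + (-3) * x ^ 2 * y ^ 0 * z ^ 5 + (-6) * x ^ 1 * y ^ 5 * z ^ 1 +
      (-22) * x ^ 1 * y ^ 4 * z ^ 2 + (-33) * x ^ 1 * y ^ 3 * z ^ 3 + (-22) * x ^ 1 * y ^
      2 * z ^ 4 + (-6) * x ^ 1 * y ^ 1 * z ^ 5 + (-3) * x ^ 0 * y ^ 5 * z ^ 2 + (-7) * x ^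
      0 * y ^ 4 * z ^ 3 + (-7) * x ^ 0 * y ^ 3 * z ^ 4 + (-3) * x ^ 0 * y ^ 2 * z ^ 5) * c2'
  obtain ⟨w, hw⟩ : ∃ w : KK, w ^ 2 + w + 1 = 0 := by
    obtain ⟨w, hw⟩ := IsAlgClosed.exists_root
      (Polynomial.X ^ 2 + Polynomial.X + 1 : Polynomial KK) (by
        have : (Polynomial.X ^ 2 + Polynomial.X + 1 : Polynomial KK).degree = 2 := by compute_degree!
        rw [this]; norm_num)
    exact ⟨w, by simpa [Polynomial.IsRoot] using hw⟩
  set E1 : MvPolynomial (Fin 3) KK := X 0 + X 1 + X 2 with hE1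
  set E2 : MvPolynomial (Fin 3) KK := X 0 * X 1 + X 0 * X 2 + X 1 * X 2 with hE2
  have hC : (C w ^ 2 + C w + 1 : MvPolynomial (Fin 3) KK) = 0 := by
    rw [← C_pow, ← C_add, ← C_1, ← C_add, hw, C_0]
  have hfact : MvPolynomial.map (algebraMap (ZMod 2) KK) g =
      (E2 + C w * E1 ^ 2) * (E2 + C (w ^ 2) * E1 ^ 2) := by
    rw [hg']
    simp only [e1, e2, map_add, map_mul, map_pow, map_X]
    rw [← hE1, ← hE2]
    linear_combination (-(E1 ^ 2 * E2) - (C w - 1) * E1 ^ 4 ) * hC + (E1 ^ 2 * E2) * c2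
  have hdv : H ∣ (E2 + C w * E1 ^ 2) * (E2 + C (w ^ 2) * E1 ^ 2) := by
    rw [← hfact]; exact map_dvd _ hh
  have hfr2 : ∀ u, H ∣ E2 + C u * E1 ^ 2 → H ∣ E2 + C (u ^ 2) * E1 ^ 2 := by
    intro u hu
    have := map_dvd (MvPolynomial.map (frobenius KK 2)) hu
    rw [hfrob] at this
    simpa [hE1, hE2, frobenius_def] using this
  have hw4 : (w ^ 2) ^ 2 = w := by
    linear_combination (w ^ 2 - w) * hw
  have hboth : H ∣ E2 + C w * E1 ^ 2 ∧ H ∣ E2 + C (w ^ 2) * E1 ^ 2 := by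
    rcases hirr.prime.dvd_or_dvd hdv with h | h
    · exact ⟨h, hfr2 _ h⟩
    · refine ⟨?_, h⟩
      have := hfr2 _ h
      rwa [hw4] at this
  have hd1 : H ∣ E1 ^ 2 := by
    have := dvd_add hboth.1 hboth.2
    rw [show E2 + C w * E1 ^ 2 + (E2 + C (w ^ 2) * E1 ^ 2) = - E1 ^ 2 by
      rw [C_pow]; linear_combination E1 ^ 2 * hC + E2 * c2] at this
    rwa [dvd_neg] at this
  have hd1' := hirr.prime.dvd_of_dvd_pow hd1
  have hd2 : H ∣ E2 := (dvd_add_left (hd1.mul_left (C w))).mp hboth.1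
  exact not_e12 hirr hd1' hd2

lemma casePow (i : ℕ) (g h : MvPolynomial (Fin 3) (ZMod 2)) (hi : i ≠ 0)
    (hg : (X 0 + X 1) * (X 0 + X 2) * (X 1 + X 2) * g =
        X 0 * X 1 ^ (2 ^ i) + X 1 * X 0 ^ (2 ^ i) + X 0 * X 2 ^ (2 ^ i) + X 2 * X 0 ^ (2 ^ i) +
          X 1 * X 2 ^ (2 ^ i) + X 2 * X 1 ^ (2 ^ i))
    (hh : h ∣ g) (hirr : Irreducible (MvPolynomial.map (algebraMap (ZMod 2) KK) h)) : False := by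
  set H := MvPolynomial.map (algebraMap (ZMod 2) KK) h with hHdef
  set G := MvPolynomial.map (algebraMap (ZMod 2) KK) g with hGdef
  have hHG : H ∣ G := map_dvd _ hh
  have c2 : (2 : MvPolynomial (Fin 3) KK) = 0 := CharTwo.two_eq_zero
  have hfrob : MvPolynomial.map (frobenius KK 2) H = H := map_frob h
  set A : MvPolynomial (Fin 3) KK := X 0 + X 2 with hA
  set B : MvPolynomial (Fin 3) KK := X 1 + X 2 with hB
  have hne : ∀ i j : Fin 3, i ≠ j → (X i + X j : MvPolynomial (Fin 3) KK) ≠ 0 := by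
    intro i j hij h
    have := congrArg (eval (Pi.single i 1)) h
    simp [hij.symm] at this
  obtain ⟨n, hn⟩ : ∃ n, 2 ^ i = n + 2 := ⟨2 ^ i - 2, by
    have : 2 ^ 1 ≤ 2 ^ i := Nat.pow_le_pow_right (by norm_num) (Nat.pos_of_ne_zero hi)
    omega⟩
  have hnodd : Odd (n + 1) := by
    have : Even (2 ^ i) := (Nat.even_pow.mpr ⟨even_two, hi⟩)
    rw [hn, Nat.even_iff] at this
    rw [Nat.odd_iff]; omega
  have hgG : (A + B) * G = A ^ (n + 1) - B ^ (n + 1) := by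
    have h1 := congrArg (MvPolynomial.map (algebraMap (ZMod 2) KK)) hg
    simp only [map_add, map_mul, map_pow, map_X] at h1
    rw [← hGdef] at h1
    apply mul_left_cancel₀ (mul_ne_zero (hne 0 2 (by decide)) (hne 1 2 (by decide)))
    have hAk : A ^ (n + 2) = X 0 ^ (2 ^ i) + X 2 ^ (2 ^ i) := by
      rw [← hn]; exact add_pow_char_pow _ _ 2 i
    have hBk : B ^ (n + 2) = X 1 ^ (2 ^ i) + X 2 ^ (2 ^ i) := by
      rw [← hn]; exact add_pow_char_pow _ _ 2 i
    have h2 : (X 0 + X 2) * (X 1 + X 2) * (A ^ (n + 1) - B ^ (n + 1)) =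
        A ^ (n + 2) * B - A * B ^ (n + 2) := by rw [← hA, ← hB]; ring
    rw [h2, hAk, hBk, hA, hB]
    generalize (X 0 : MvPolynomial (Fin 3) KK) ^ (2 ^ i) = x' at *
    generalize (X 1 : MvPolynomial (Fin 3) KK) ^ (2 ^ i) = y' at *
    generalize (X 2 : MvPolynomial (Fin 3) KK) ^ (2 ^ i) = z' at *
    clear_value G H
    generalize (X 0 : MvPolynomial (Fin 3) KK)  = x at *
    generalize (X 1 : MvPolynomial (Fin 3) KK)  = y at *
    generalize (X 2 : MvPolynomial (Fin 3) KK)  = z at *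
    linear_combination h1 + ((x + z) * (y + z) * z * G + x * y' + x * z' + y' * z) * c2
  have hnot : ¬ (H ∣ A ∧ H ∣ B) := fun hab => not_both hirr hab.1 hab.2
  have : NeZero ((n + 1 : ℕ) : KK) := by
    refine ⟨?_⟩
    rw [Ne, CharP.cast_eq_zero_iff KK 2, ← even_iff_two_dvd, Nat.not_even_iff_odd]
    exact hnodd
  obtain ⟨ζ, hζ⟩ := HasEnoughRootsOfUnity.exists_primitiveRoot KK (n + 1)
  have hζ' : IsPrimitiveRoot (C ζ : MvPolynomial (Fin 3) KK) (n + 1) :=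
    hζ.map_of_injective (C_injective _ _)
  have hex : ∃ u : KK, u ≠ 0 ∧ H ∣ A - C u * B := by
    have hd : H ∣ A ^ (n + 1) - B ^ (n + 1) := by rw [← hgG]; exact hHG.mul_left _
    rw [hζ'.pow_sub_pow_eq_prod_sub_mul A B (Nat.succ_pos n)] at hd
    obtain ⟨r, hr, hdr⟩ := (Prime.dvd_finsetProd_iff hirr.prime _).mp hd
    rw [Polynomial.mem_nthRootsFinset (Nat.succ_pos n)] at hr
    obtain ⟨j, _, hj⟩ := hζ'.eq_pow_of_pow_eq_one hr
    refine ⟨ζ ^ j, pow_ne_zero _ (hζ.ne_zero (Nat.succ_ne_zero n)), ?_⟩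
    rw [C_pow, hj]
    exact hdr
  obtain ⟨u, hu0, hu⟩ := hex
  have hu2 : H ∣ A - C (u ^ 2) * B := by
    have := map_dvd (MvPolynomial.map (frobenius KK 2)) hu
    rw [hfrob] at this
    simpa [hA, hB, frobenius_def] using this
  have hdiff : H ∣ C (u ^ 2 - u) * B := by
    have := dvd_sub hu hu2
    convert this using 1
    rw [C_sub]; ring
  have hB' : H ∣ B → False := fun hb => hnot ⟨(dvd_sub_left (hb.mul_left (C u))).mp hu, hb⟩
  rcases hirr.prime.dvd_or_dvd hdiff with hc | hb
  · have huu : u ^ 2 - u = 0 := by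
      by_contra hne0
      exact hirr.not_isUnit (isUnit_of_dvd_unit hc ((isUnit_iff_ne_zero.mpr hne0).map C))
    have : u * (u - 1) = 0 := by linear_combination huu
    have hAB : H ∣ A + B := by
      rcases mul_eq_zero.mp this with h0 | h1
      · exact absurd h0 hu0
      · have : u = 1 := by linear_combination h1
        rw [this, C_1, one_mul] at hu
        rwa [show A + B = A - B + 2 * B by ring, c2, zero_mul, add_zero]
    have hder := congrArg (pderiv 0) hgG
    have dA : pderiv 0 A = 1 := by simp [hA, pderiv_X]
    have dB : pderiv 0 B = 0 := by simp [hB, pderiv_X]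
    rw [pderiv_mul, map_add, map_sub, pderiv_pow, pderiv_pow, dA, dB] at hder
    obtain ⟨r, hr⟩ := hnodd
    have hAn : H ∣ A ^ n := by
      have h1 : A ^ n = G + (A + B) * pderiv 0 G := by
        rw [hr] at hder
        push_cast at hder
        rw [show 2 * r = n by omega] at hder
        linear_combination -hder - r * A ^ n * c2
      rw [h1]
      exact dvd_add hHG (hAB.mul_right _)
    have hA' := hirr.prime.dvd_of_dvd_pow hAn
    exact hnot ⟨hA', (dvd_add_right hA').mp hAB⟩
  · exact hB' hb


/-- Let `k` be an even positive integer and `g_k ∈ 𝔽₂[x,y,z]` the homogeneous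
polynomial of degree `k-2` with `(x+y)(x+z)(y+z)·g_k = x·y^k + y·x^k + x·z^k + z·x^k + y·z^k + z·y^k`.
If `g_k` has a factor over `𝔽₂` that is absolutely irreducible (irreducible over the algebraic
closure of `𝔽₂`), then the set of `e ≥ 1` such that the above determinant expression is nonzero
for all pairwise distinct `x, y, z ∈ GF(2^e)` (i.e. `D(x^k)` is a hyperoval in `PG(2,2^e)`)
is finite. -/
theorem hyperoval_finite_of_absolutely_irreducible_factor
    (k : ℕ) (hk_even : Even k) (hk_pos : 0 < k)
    (g : MvPolynomial (Fin 3) (ZMod 2))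
    (hhom : g.IsHomogeneous (k - 2))
    (hg : (X 0 + X 1) * (X 0 + X 2) * (X 1 + X 2) * g =
        X 0 * X 1 ^ k + X 1 * X 0 ^ k + X 0 * X 2 ^ k + X 2 * X 0 ^ k +
          X 1 * X 2 ^ k + X 2 * X 1 ^ k)
    (hfac : ∃ h : MvPolynomial (Fin 3) (ZMod 2), h ∣ g ∧
        Irreducible (MvPolynomial.map (algebraMap (ZMod 2) (AlgebraicClosure (ZMod 2))) h)) :
    {e : ℕ | 0 < e ∧ ∀ x y z : GaloisField 2 e, x ≠ y → x ≠ z → y ≠ z →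
      x * y ^ k + y * x ^ k + x * z ^ k + z * x ^ k + y * z ^ k + z * y ^ k ≠ 0}.Finite := by
  obtain ⟨h, hh, hirr⟩ := hfac
  by_cases h6 : k = 6
  · subst h6
    exact (caseSix g h hg hh hirr).elim
  by_cases hp : ∃ i, k = 2 ^ i
  · obtain ⟨i, rfl⟩ := hp
    have hi : i ≠ 0 := by
      rintro rfl
      exact absurd hk_even (by decide)
    exact (casePow i g h hi hg hh hirr).elim
  push Not at hp
  have hk1 : k - 1 + 1 = k := by omega
  have hodd : Odd (k - 1) := by
    obtain ⟨r, hr⟩ := hk_even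
    exact ⟨r - 1, by omega⟩
  obtain ⟨E, hE⟩ := Wk.large hodd (by omega) (fun i => by rw [hk1]; exact hp i)
  rw [hk1] at hE
  refine (Set.finite_lt_nat (E + k + 2)).subset ?_
  rintro e ⟨he0, H⟩
  by_contra hlt
  have hge : E + k + 2 ≤ e := not_lt.mp hlt
  haveI : Fintype (GaloisField 2 e) := Fintype.ofFinite _
  have hcard : Fintype.card (GaloisField 2 e) = 2 ^ e := by
    rw [← Nat.card_eq_fintype_card]
    exact GaloisField.card 2 e he0.ne'
  have hlt2 : e < 2 ^ e := Nat.lt_two_pow_self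
  obtain ⟨d, i, h1, h2, h3, h4, h5⟩ := hE e (by omega)
  haveI : CharP (GaloisField 2 e) 2 := inferInstance
  exact partB k hk_even hk_pos (by omega) (by omega) H d i (by rw [hcard]; exact h1) h2
    (by rw [hcard]; exact h3) h4 (by rw [hcard]; exact h5)
end

section
/- Let k = 2^i·ℓ be an even positive integer with ℓ odd and i ≥ 1, let K be an algebraic closure of 𝔽₂, and let g_k(x,y) ∈ K[x,y] be the polynomial with (x+y)(x+1)(y+1)·g_k(x,y) = x·y^k + y·x^k + x^k + y^k + x + y. Suppose g_k(x,y) = u(x,y)·v(x,y) with u, v ∈ K[x,y], and let P = (α, β) be a Type III singular point of g_k (α^ℓ = β^ℓ = 1, α ≠ β, α ≠ 1, β ≠ 1). Then min(m_P(u), m_P(v)) ≤ 1. -/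
open MvPolynomial

/-- The algebraic closure of `𝔽₂`. -/
abbrev Kbar : Type := AlgebraicClosure (ZMod 2)

/-- Translation of a bivariate polynomial, `h(x+α, y+β)`. -/
noncomputable def translatePoly (α β : Kbar) (h : MvPolynomial (Fin 2) Kbar) :
    MvPolynomial (Fin 2) Kbar :=
  aeval ![X 0 + C α, X 1 + C β] h

/-- The multiplicity `m_P(h)` of `h` at the point `P = (α, β)`: the least `m` such that the
degree-`m` homogeneous component of `h(x+α, y+β)` is nonzero. -/
noncomputable def multAt (α β : Kbar) (h : MvPolynomial (Fin 2) Kbar) : ℕ :=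
  sInf {m | homogeneousComponent m (translatePoly α β h) ≠ 0}

/-- The affine polynomial `f_k(x,y) = x·y^k + y·x^k + x^k + y^k + x + y` over `Kbar`. -/
noncomputable def fpoly (k : ℕ) : MvPolynomial (Fin 2) Kbar :=
  X 0 * X 1 ^ k + X 1 * X 0 ^ k + X 0 ^ k + X 1 ^ k + X 0 + X 1

/-- Extract the exact power of `X`. -/
lemma exists_exact_pow (K : Type) [Field K] (p : Polynomial (Polynomial K)) (hp : p ≠ 0) :
    ∃ (r : ℕ) (U : Polynomial (Polynomial K)), p = Polynomial.X ^ r * U ∧ U.coeff 0 ≠ 0 := by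
  obtain ⟨U, h1, h2⟩ := Polynomial.exists_eq_pow_rootMultiplicity_mul_and_not_dvd p hp 0
  simp only [map_zero, sub_zero] at h1 h2
  exact ⟨_, U, h1, fun h => h2 (Polynomial.X_dvd_iff.2 h)⟩

/-- If `U` divides a constant times `(X - t₀)^q`, it is divisible by the power of its degree. -/
lemma pow_natDegree_dvd (K : Type) [Field K] (U : Polynomial K) (e t₀ : K) (q : ℕ) (he : e ≠ 0)
    (h : U ∣ Polynomial.C e * (Polynomial.X - Polynomial.C t₀) ^ q) :
    (Polynomial.X - Polynomial.C t₀) ^ U.natDegree ∣ U := by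
  have hu : IsUnit (Polynomial.C e) := Polynomial.isUnit_C.2 he.isUnit
  rw [hu.dvd_mul_left] at h
  obtain ⟨j, -, hj⟩ := (dvd_prime_pow (Polynomial.prime_X_sub_C t₀) q).1 h
  have : U.natDegree = j := by
    rw [Polynomial.natDegree_eq_of_degree_eq (Polynomial.degree_eq_degree_of_associated hj)]
    simp
  rw [this]
  exact hj.symm.dvd

lemma key (K : Type) [Field K] (p p' R : Polynomial (Polynomial K)) (q : ℕ)
    (e t₀ : K) (F1 : Polynomial K) (he : e ≠ 0)
    (h : p * p' = Polynomial.X ^ q * (Polynomial.C (Polynomial.C e *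
      (Polynomial.X - Polynomial.C t₀) ^ q) + Polynomial.X * Polynomial.C F1
        + Polynomial.X ^ 2 * R))
    (hp : Polynomial.X ^ 2 ∣ p) (hp' : Polynomial.X ^ 2 ∣ p')
    (hd : ∀ m, (p.coeff m).natDegree ≤ m) (hd' : ∀ m, (p'.coeff m).natDegree ≤ m) :
    (Polynomial.X - Polynomial.C t₀) ^ 2 ∣ F1 := by
  set F0 := Polynomial.C e * (Polynomial.X - Polynomial.C t₀) ^ q with hF0
  have hF0n : F0 ≠ 0 := mul_ne_zero (by simpa using he) (pow_ne_zero _ (Polynomial.X_sub_C_ne_zero t₀))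
  set F := (Polynomial.C F0 + Polynomial.X * Polynomial.C F1 + Polynomial.X ^ 2 * R) with hF
  have c0 : F.coeff 0 = F0 := by simp [hF]
  have c1 : F.coeff 1 = F1 := by
    simp only [hF, Polynomial.coeff_add, Polynomial.coeff_C_succ, pow_two, mul_assoc,
      Polynomial.coeff_X_mul, Polynomial.mul_coeff_zero]
    simp [Polynomial.coeff_one]
  have hFn : F ≠ 0 := fun h0 => hF0n (by rw [← c0, h0]; simp)
  have hpp : p * p' ≠ 0 := by
    rw [h]; exact mul_ne_zero (pow_ne_zero _ Polynomial.X_ne_zero) hFn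
  obtain ⟨r, U, hU, hU0⟩ := exists_exact_pow K p (left_ne_zero_of_mul hpp)
  obtain ⟨r', V, hV, hV0⟩ := exists_exact_pow K p' (right_ne_zero_of_mul hpp)
  have h2 : 2 ≤ r := by
    by_contra hlt
    have hh := (Polynomial.X_pow_dvd_iff.1 hp) r (by omega)
    rw [hU, Polynomial.coeff_X_pow_mul'] at hh
    simp at hh; exact hU0 hh
  have h2' : 2 ≤ r' := by
    by_contra hlt
    have hh := (Polynomial.X_pow_dvd_iff.1 hp') r' (by omega)
    rw [hV, Polynomial.coeff_X_pow_mul'] at hh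
    simp at hh; exact hV0 hh
  have hprod : Polynomial.X ^ (r + r') * (U * V) = Polynomial.X ^ q * F := by
    rw [← h, hU, hV]; ring
  have hUV0 : (U * V).coeff 0 ≠ 0 := by
    rw [Polynomial.mul_coeff_zero]; exact mul_ne_zero hU0 hV0
  have hq : r + r' = q := by
    have e1 := congrArg (fun z => Polynomial.coeff z (r + r')) hprod
    have e2 := congrArg (fun z => Polynomial.coeff z q) hprod
    simp only [Polynomial.coeff_X_pow_mul'] at e1 e2
    rcases lt_trichotomy (r + r') q with hl | hl | hl
    · rw [if_pos le_rfl, if_neg (by omega), Nat.sub_self] at e1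
      exact absurd e1 hUV0
    · exact hl
    · rw [if_pos le_rfl, if_neg (by omega), Nat.sub_self, c0] at e2
      exact absurd e2.symm hF0n
  rw [hq] at hprod
  have hUV := mul_left_cancel₀ (pow_ne_zero q Polynomial.X_ne_zero) hprod
  have m0 : U.coeff 0 * V.coeff 0 = F0 := by rw [← c0, ← hUV, Polynomial.mul_coeff_zero]
  have m1 : U.coeff 0 * V.coeff 1 + U.coeff 1 * V.coeff 0 = F1 := by
    rw [← c1, ← hUV, Polynomial.mul_coeff_one]
  have dU : (U.coeff 0).natDegree ≤ r := by
    have := hd r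
    rwa [hU, Polynomial.coeff_X_pow_mul', if_pos le_rfl, Nat.sub_self] at this
  have dV : (V.coeff 0).natDegree ≤ r' := by
    have := hd' r'
    rwa [hV, Polynomial.coeff_X_pow_mul', if_pos le_rfl, Nat.sub_self] at this
  have dF : (U.coeff 0).natDegree + (V.coeff 0).natDegree = q := by
    rw [← Polynomial.natDegree_mul hU0 hV0, m0, hF0, Polynomial.natDegree_C_mul he]
    simp
  have dvU := pow_natDegree_dvd K (U.coeff 0) e t₀ q he (hF0 ▸ m0 ▸ dvd_mul_right _ _)
  have dvV := pow_natDegree_dvd K (V.coeff 0) e t₀ q he (hF0 ▸ m0 ▸ dvd_mul_left _ _)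
  have dvU2 := (pow_dvd_pow (Polynomial.X - Polynomial.C t₀)
    (show 2 ≤ (U.coeff 0).natDegree by omega)).trans dvU
  have dvV2 := (pow_dvd_pow (Polynomial.X - Polynomial.C t₀)
    (show 2 ≤ (V.coeff 0).natDegree by omega)).trans dvV
  rw [← m1]
  exact dvd_add (dvU2.mul_right _) (dvV2.mul_left _)

/-- The blow-up substitution `x ↦ s`, `y ↦ s t`. -/
noncomputable def blowup : MvPolynomial (Fin 2) Kbar →ₐ[Kbar] Polynomial (Polynomial Kbar) :=
  aeval ![Polynomial.X, Polynomial.X * Polynomial.C Polynomial.X]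

lemma blowup_degree (h : MvPolynomial (Fin 2) Kbar) :
    ∀ m, ((blowup h).coeff m).natDegree ≤ m := by
  induction h using MvPolynomial.induction_on with
  | C a =>
    intro m
    have : blowup (C a) = Polynomial.C (Polynomial.C a) := by
      simp [blowup]
    rw [this, Polynomial.coeff_C]
    split_ifs <;> simp
  | add p q hp hq =>
    intro m
    rw [map_add, Polynomial.coeff_add]
    exact (Polynomial.natDegree_add_le _ _).trans (max_le (hp m) (hq m))
  | mul_X p n hp =>
    intro m
    rw [map_mul]
    fin_cases n
    · have : blowup (X 0) = Polynomial.X := by simp [blowup]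
      simp only [Fin.zero_eta, this]
      cases m with
      | zero => simp
      | succ m => rw [Polynomial.coeff_mul_X]; exact (hp m).trans (Nat.le_succ m)
    · have : blowup (X 1) = Polynomial.X * Polynomial.C Polynomial.X := by simp [blowup]
      simp only [Fin.mk_one, this]
      rw [← mul_assoc, Polynomial.coeff_mul_C]
      cases m with
      | zero => simp
      | succ m =>
        rw [Polynomial.coeff_mul_X]
        exact Polynomial.natDegree_mul_le.trans (by simpa using hp m)

lemma blowup_coeff (h : MvPolynomial (Fin 2) Kbar) (j : ℕ) :
    (blowup h).coeff j = aeval ![1, Polynomial.X] (homogeneousComponent j h) := by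
  induction h using MvPolynomial.induction_on' with
  | add p q hp hq => simp [hp, hq]
  | monomial d a =>
    have h1 : blowup (monomial d a) = Polynomial.C (Polynomial.C a * Polynomial.X ^ (d 1)) *
        Polynomial.X ^ (d 0 + d 1) := by
      rw [blowup, aeval_monomial, Finsupp.prod_fintype _ _ (by simp)]
      have : algebraMap Kbar (Polynomial (Polynomial Kbar)) a
        = Polynomial.C (Polynomial.C a) := rfl
      rw [this]
      simp [Fin.prod_univ_two]
      ring
    have hdeg : d.degree = d 0 + d 1 := by
      rw [Finsupp.degree_eq_sum]; simp [Fin.sum_univ_two]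
    have hh := isHomogeneous_monomial (n := d.degree) a rfl
    rw [h1, Polynomial.coeff_C_mul, Polynomial.coeff_X_pow]
    rw [homogeneousComponent_of_mem ((mem_homogeneousSubmodule _ _).2 hh), hdeg]
    split_ifs with hc
    · rw [aeval_monomial, Finsupp.prod_fintype _ _ (by simp)]
      simp [Fin.prod_univ_two]
    · simp

lemma blowup_dvd (α β : Kbar) (h : MvPolynomial (Fin 2) Kbar) (hm : 2 ≤ multAt α β h) :
    Polynomial.X ^ 2 ∣ blowup (translatePoly α β h) := by
  rw [Polynomial.X_pow_dvd_iff]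
  intro d hd
  have : d ∉ {m | homogeneousComponent m (translatePoly α β h) ≠ 0} :=
    Nat.notMem_of_lt_sInf (lt_of_lt_of_le hd hm)
  simp only [Set.mem_setOf_eq, not_not] at this
  rw [blowup_coeff, this, map_zero]

/-- Local expansion of the `k`-th power. -/
lemma pow_expand {A : Type} [CommRing A] [CharP A 2] (i ℓ : ℕ) (hi : 1 ≤ i) (hℓ : Odd ℓ)
    (a z s w : A) (ha : a ^ ℓ = 1) (hz : z = s * w) :
    ∃ R, (z + a) ^ (2 ^ i * ℓ) = 1 + (a ^ (ℓ - 1)) ^ 2 ^ i * w ^ 2 ^ i * s ^ 2 ^ i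
      + s ^ 2 ^ i * s ^ 2 * R := by
  obtain ⟨R, hR⟩ := Polynomial.powAddExpansion a z ℓ
  have hl : (ℓ : A) = 1 := by
    obtain ⟨m, rfl⟩ := hℓ
    push_cast
    rw [CharTwo.two_eq_zero]; ring
  obtain ⟨n, hn⟩ : ∃ n, 2 ^ i = n + 2 := by
    have : 2 ^ 1 ≤ 2 ^ i := Nat.pow_le_pow_right (by norm_num) hi
    exact ⟨2 ^ i - 2, by omega⟩
  refine ⟨R ^ 2 ^ i * s ^ n * (w ^ 2) ^ 2 ^ i, ?_⟩
  haveI : Fact (Nat.Prime 2) := ⟨Nat.prime_two⟩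
  rw [mul_comm (2 ^ i) ℓ, pow_mul, add_comm z a, hR, ha, hl, add_pow_char_pow, add_pow_char_pow,
    one_pow, hz]
  have : (R * (s * w) ^ 2) ^ 2 ^ i = s ^ 2 ^ i * s ^ 2 ^ i * R ^ 2 ^ i * (w ^ 2) ^ 2 ^ i := by
    ring
  rw [this]
  have h3 : s ^ 2 ^ i * s ^ 2 ^ i = s ^ 2 ^ i * (s ^ 2 * s ^ n) := by
    conv_lhs => rw [hn]
    rw [hn]; ring
  rw [h3]
  ring

/-- For `k = 2^i·ℓ` (`ℓ` odd, `i ≥ 1`), let `g_k` satisfy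
`(x+y)(x+1)(y+1)·g_k = f_k` over the algebraic closure of `𝔽₂`.  If `g_k = u·v` and
`P = (α,β)` is a Type III singular point of `g_k` (`α^ℓ = β^ℓ = 1`, `α ≠ β`, `α ≠ 1`,
`β ≠ 1`), then `min(m_P(u), m_P(v)) ≤ 1`. -/
theorem factor_multiplicity_at_type_III
    (i ℓ k : ℕ) (hi : 1 ≤ i) (hℓ : Odd ℓ) (hk : k = 2 ^ i * ℓ)
    (g u v : MvPolynomial (Fin 2) Kbar)
    (hg : (X 0 + X 1) * (X 0 + 1) * (X 1 + 1) * g = fpoly k)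
    (huv : g = u * v)
    (α β : Kbar) (hα : α ^ ℓ = 1) (hβ : β ^ ℓ = 1)
    (hαβ : α ≠ β) (hα1 : α ≠ 1) (hβ1 : β ≠ 1) :
    min (multAt α β u) (multAt α β v) ≤ 1 := by
  by_contra hcon
  rw [not_le, lt_min_iff] at hcon
  obtain ⟨hu, hv⟩ := hcon
  haveI : CharP Kbar 2 := inferInstance
  set T : MvPolynomial (Fin 2) Kbar →ₐ[Kbar] Polynomial (Polynomial Kbar) :=
    blowup.comp (aeval ![X 0 + C α, X 1 + C β]) with hT
  have hTe : ∀ h, T h = blowup (translatePoly α β h) := fun h => rfl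
  set W : MvPolynomial (Fin 2) Kbar := (X 0 + X 1) * (X 0 + 1) * (X 1 + 1) with hW
  set s : Polynomial (Polynomial Kbar) := Polynomial.X with hs
  have T0 : T (X 0) = s + Polynomial.C (Polynomial.C α) := by
    simp [hT, blowup]; rfl
  have T1 : T (X 1) = s * Polynomial.C Polynomial.X + Polynomial.C (Polynomial.C β) := by
    simp [hT, blowup]; exact mul_comm _ _
  have hα0 : α ≠ 0 := by
    rintro rfl
    rw [zero_pow hℓ.pos.ne'] at hα
    exact zero_ne_one hα
  have hβ0 : β ≠ 0 := by
    rintro rfl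
    rw [zero_pow hℓ.pos.ne'] at hβ
    exact zero_ne_one hβ
  obtain ⟨R0, hR0⟩ := pow_expand i ℓ hi hℓ (Polynomial.C (Polynomial.C α)) s s 1
    (by rw [← map_pow, ← map_pow, hα]; simp) (by ring)
  obtain ⟨R1, hR1⟩ := pow_expand i ℓ hi hℓ (Polynomial.C (Polynomial.C β))
    (s * Polynomial.C Polynomial.X) s (Polynomial.C Polynomial.X)
    (by rw [← map_pow, ← map_pow, hβ]; simp) rfl
  obtain ⟨c, hc⟩ : ∃ c, c = (α ^ (ℓ - 1)) ^ 2 ^ i := ⟨_, rfl⟩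
  obtain ⟨d, hd⟩ : ∃ d, d = (β ^ (ℓ - 1)) ^ 2 ^ i := ⟨_, rfl⟩
  have hc0 : c ≠ 0 := by rw [hc]; exact pow_ne_zero _ (pow_ne_zero _ hα0)
  have hd0 : d ≠ 0 := by rw [hd]; exact pow_ne_zero _ (pow_ne_zero _ hβ0)
  simp only [← map_pow, ← hc, ← hd] at hR0 hR1
  have ha1 : α + 1 ≠ 0 := fun h => hα1 (CharTwo.add_eq_zero.1 h)
  have he : (α + 1) * d ≠ 0 := mul_ne_zero ha1 hd0
  obtain ⟨t₀, ht₀⟩ := IsAlgClosed.exists_pow_nat_eq ((β + 1) * c / ((α + 1) * d))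
    (show 0 < 2 ^ i by positivity)
  haveI : Fact (Nat.Prime 2) := ⟨Nat.prime_two⟩
  have hF0 : Polynomial.C ((α + 1) * d) * (Polynomial.X - Polynomial.C t₀) ^ 2 ^ i
      = Polynomial.C ((α + 1) * d) * Polynomial.X ^ 2 ^ i + Polynomial.C ((β + 1) * c) := by
    rw [CharTwo.sub_eq_add, add_pow_char_pow, ← map_pow, ht₀, mul_add, ← map_mul,
      mul_div_cancel₀ _ he]
  have hTf : T (fpoly k) = s ^ 2 ^ i * (Polynomial.C (Polynomial.C ((α + 1) * d) *
      (Polynomial.X - Polynomial.C t₀) ^ 2 ^ i)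
      + s * Polynomial.C (Polynomial.C d * Polynomial.X ^ 2 ^ i + Polynomial.C c * Polynomial.X)
      + s ^ 2 * ((s + Polynomial.C (Polynomial.C (α + 1))) * R1
        + (s * Polynomial.C Polynomial.X + Polynomial.C (Polynomial.C (β + 1))) * R0)) := by
    rw [hF0, fpoly]
    simp only [map_add, map_mul, map_pow, T0, T1]
    rw [hk, hR0, hR1]
    simp only [map_add, map_mul, map_pow, map_one]
    have h2 : (2 : Polynomial (Polynomial Kbar)) = 0 := CharTwo.two_eq_zero
    linear_combination (s + s * Polynomial.C Polynomial.X + Polynomial.C (Polynomial.C α)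
      + Polynomial.C (Polynomial.C β) + 1) * h2
  have hprod : T u * T (W * v) = T (fpoly k) := by
    rw [← map_mul, ← hg, huv]
    congr 1; ring
  have hdvd := key Kbar (T u) (T (W * v)) _ (2 ^ i) ((α + 1) * d) t₀ _ he (hprod.trans hTf)
    (blowup_dvd α β u hu)
    (by rw [map_mul]; exact (blowup_dvd α β v hv).mul_left _)
    (blowup_degree _) (blowup_degree _)
  obtain ⟨Q, hQ⟩ := hdvd
  have hder := congrArg (fun z => (Polynomial.derivative z).eval t₀) hQ
  have h20 : (2 : Kbar) ^ i = 0 := by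
    have h2 : (2 : Kbar) = 0 := CharTwo.two_eq_zero
    exact (congrArg (fun z : Kbar => z ^ i) h2).trans (zero_pow (by omega))
  simp [Polynomial.derivative_pow, h20] at hder
  exact hc0 hder
end

section
/- (Segre) Let k = 2^i with i ≥ 1 and let e ≥ 1. Then D(x^k) is a hyperoval in PG(2, 2^e) if and only if gcd(i, e) = 1; equivalently, the determinant x·y^k + y·x^k + x·z^k + z·x^k + y·z^k + z·y^k is nonzero for all pairwise distinct x, y, z ∈ GF(2^e) if and only if gcd(i, e) = 1. -/
/-- Segre: For `k = 2^i` (`i ≥ 1`) and `e ≥ 1`, the set `D(x^k)` is a hyperoval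
in `PG(2, 2^e)` — equivalently, the determinant
`x·y^k + y·x^k + x·z^k + z·x^k + y·z^k + z·y^k` is nonzero for all pairwise distinct
`x, y, z ∈ GF(2^e)` — if and only if `gcd(i, e) = 1`. -/
theorem segre_two_power_hyperoval (i k e : ℕ) (hi : 1 ≤ i) (hk : k = 2 ^ i) (he : 1 ≤ e) :
    (∀ x y z : GaloisField 2 e, x ≠ y → x ≠ z → y ≠ z →
      x * y ^ k + y * x ^ k + x * z ^ k + z * x ^ k + y * z ^ k + z * y ^ k ≠ 0) ↔
    Nat.gcd i e = 1 := by
  have hcard : Nat.card (GaloisField 2 e) = 2 ^ e := GaloisField.card 2 e (by omega)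
  have hg : Nat.gcd (2 ^ i - 1) (2 ^ e - 1) = 2 ^ (Nat.gcd i e) - 1 :=
    Nat.pow_sub_one_gcd_pow_sub_one 2 i e
  have hfin : Finite (GaloisField 2 e) := Nat.finite_of_card_ne_zero (by rw [hcard]; positivity)
  have hucard : Nat.card (GaloisField 2 e)ˣ = 2 ^ e - 1 := by
    rw [Nat.card_units, hcard]
  have hkpos : 1 ≤ k := hk ▸ Nat.one_le_two_pow
  have h2 : ∀ a : GaloisField 2 e, a + a = 0 := fun a => CharTwo.add_self_eq_zero a
  constructor
  · intro h
    by_contra hne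
    have hd0 : Nat.gcd i e ≠ 0 := Nat.ne_of_gt (Nat.gcd_pos_of_pos_left _ hi)
    have hd : 2 ≤ Nat.gcd i e := by omega
    have h4 : 2 ^ 2 ≤ 2 ^ (Nat.gcd i e) := Nat.pow_le_pow_right (by norm_num) hd
    obtain ⟨p, hp, hpd⟩ := Nat.exists_prime_and_dvd (n := 2 ^ (Nat.gcd i e) - 1) (by omega)
    rw [← hg] at hpd
    have hpi := hpd.trans (Nat.gcd_dvd_left _ _)
    have hpe := hpd.trans (Nat.gcd_dvd_right _ _)
    haveI := Fact.mk hp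
    obtain ⟨u, hu⟩ := exists_prime_orderOf_dvd_card' (G := (GaloisField 2 e)ˣ) p
      (by rw [hucard]; exact hpe)
    have hu1 : u ≠ 1 := by
      rintro rfl
      rw [orderOf_one] at hu
      exact hp.one_lt.ne hu
    have hpow : u ^ (k - 1) = 1 := by
      rw [← orderOf_dvd_iff_pow_eq_one, hu, hk]; exact hpi
    have hpow' : u ^ k = u := by
      rw [← Nat.sub_add_cancel hkpos, pow_succ, hpow, one_mul]
    have hc : (u : GaloisField 2 e) ^ k = u := by
      rw [← Units.val_pow_eq_pow_val, hpow']
    refine h (u : GaloisField 2 e) 1 0 ?_ u.ne_zero one_ne_zero ?_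
    · intro hh; exact hu1 (Units.ext hh)
    · rw [hc, zero_pow (by omega)]
      simp [h2]
  · intro hgcd x y z hxy hxz hyz h0
    have hadd : ∀ a b : GaloisField 2 e, (a - b) ^ k = a ^ k - b ^ k := by
      intro a b; rw [hk]; exact sub_pow_char_pow ..
    have hb : y - z ≠ 0 := sub_ne_zero.mpr hyz
    have ha : x - z ≠ 0 := sub_ne_zero.mpr hxz
    have key : (x - z) * (y - z) ^ k = (y - z) * (x - z) ^ k := by
      rw [hadd, hadd]
      linear_combination h0 - h2 (y * x ^ k) - h2 (x * z ^ k) - h2 (z * y ^ k)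
    set u : (GaloisField 2 e)ˣ := Units.mk0 (x - z) ha / Units.mk0 (y - z) hb with hu
    have huk : u ^ k = u := by
      rw [hu, div_pow, div_eq_div_iff_mul_eq_mul]
      ext
      simp only [Units.val_mul, Units.val_pow_eq_pow_val, Units.val_mk0]
      linear_combination -key
    have hu1 : u ^ (2 ^ i - 1) = 1 := by
      rw [← hk]
      have : u ^ (k - 1) * u = 1 * u := by
        rw [← pow_succ, Nat.sub_add_cancel hkpos, huk, one_mul]
      exact mul_right_cancel this
    have hu2 : u ^ (2 ^ e - 1) = 1 := by
      rw [← hucard]; exact pow_card_eq_one'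
    have hdvd := Nat.dvd_gcd (orderOf_dvd_of_pow_eq_one hu1) (orderOf_dvd_of_pow_eq_one hu2)
    rw [hg, hgcd] at hdvd
    have hone : u = 1 := orderOf_eq_one_iff.mp (Nat.dvd_one.mp hdvd)
    rw [hu, div_eq_one] at hone
    have := congrArg Units.val hone
    simp only [Units.val_mk0] at this
    exact hxy (sub_left_injective this)
end

section
/- Let k be an even positive integer with k ≡ 2 (mod 4) and k > 6, and let g_k(x,y) ∈ 𝔽₂[x,y] be the polynomial of degree k−2 with (x+y)(x+1)(y+1)·g_k(x,y) = x·y^k + y·x^k + x^k + y^k + x + y. Then g_k(x,y) is absolutely irreducible, i.e., irreducible as an element of K[x,y] for K an algebraic closure of 𝔽₂. -/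
open MvPolynomial

section top
variable {K : Type*} [Field K]

theorem drop_top (p : MvPolynomial (Fin 2) K) (n : ℕ) (hp : p.totalDegree ≤ n)
    (h : homogeneousComponent n p = 0) : p = 0 ∨ p.totalDegree + 1 ≤ n := by
  by_cases h0 : p = 0
  · exact Or.inl h0
  right
  refine lt_of_le_of_ne hp fun heq => ?_
  obtain ⟨d, hd, hdn⟩ := Finset.exists_mem_eq_sup p.support (support_nonempty.2 h0)
    (fun s => s.sum fun _ e => e)
  have h1 : coeff d (homogeneousComponent n p) = coeff d p := by
    rw [coeff_homogeneousComponent, if_pos]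
    rw [← heq, totalDegree, hdn]
    rfl
  rw [h] at h1
  exact (mem_support_iff.1 hd) (by simpa using h1.symm)

theorem hc_hc (p : MvPolynomial (Fin 2) K) (n : ℕ) :
    homogeneousComponent n (homogeneousComponent n p) = homogeneousComponent n p :=
  homogeneousComponent_eq_self (homogeneousComponent_isHomogeneous n p)

theorem hc_deg (p : MvPolynomial (Fin 2) K) (n : ℕ) :
    (homogeneousComponent n p).totalDegree ≤ n :=
  (homogeneousComponent_isHomogeneous n p).totalDegree_le

theorem hc_mul_zero (p q : MvPolynomial (Fin 2) K) (a b : ℕ) (hp : p.totalDegree ≤ a)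
    (hq : q.totalDegree ≤ b) (h : homogeneousComponent a p = 0) :
    homogeneousComponent (a + b) (p * q) = 0 := by
  rcases drop_top p a hp h with rfl | h1
  · simp
  · apply homogeneousComponent_eq_zero
    have := totalDegree_mul p q
    omega

theorem hc_mul (p q : MvPolynomial (Fin 2) K) (a b : ℕ) (hp : p.totalDegree ≤ a)
    (hq : q.totalDegree ≤ b) :
    homogeneousComponent (a + b) (p * q) = homogeneousComponent a p * homogeneousComponent b q := by
  have e : p * q = homogeneousComponent a p * homogeneousComponent b q
      + ((p - homogeneousComponent a p) * q
      + (q - homogeneousComponent b q) * homogeneousComponent a p) := by ring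
  have e1 : homogeneousComponent (a + b) ((p - homogeneousComponent a p) * q) = 0 := by
    apply hc_mul_zero _ _ _ _ _ hq
    · rw [map_sub, hc_hc, sub_self]
    · exact (totalDegree_sub _ _).trans (max_le hp (hc_deg _ _))
  have e2 : homogeneousComponent (a + b)
      ((q - homogeneousComponent b q) * homogeneousComponent a p) = 0 := by
    rw [add_comm a b]
    apply hc_mul_zero _ _ _ _ _ (hc_deg _ _)
    · rw [map_sub, hc_hc, sub_self]
    · exact (totalDegree_sub _ _).trans (max_le hq (hc_deg _ _))
  rw [e, map_add, map_add, e1, e2, add_zero, add_zero]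
  exact homogeneousComponent_eq_self
    ((homogeneousComponent_isHomogeneous a p).mul (homogeneousComponent_isHomogeneous b q))

theorem descent (u v f : MvPolynomial (Fin 2) K) (a b m : ℕ) (hu : u.totalDegree = a)
    (hv : v.totalDegree = b) (hu0 : u ≠ 0) (hv0 : v ≠ 0)
    (hcop : IsRelPrime (homogeneousComponent a u) (homogeneousComponent b v))
    (hf : f.totalDegree ≤ m) (j : ℕ) :
    ∀ U V : MvPolynomial (Fin 2) K, f = U * u + V * v →
      (U = 0 ∨ U.totalDegree + a ≤ m + j) → (V = 0 ∨ V.totalDegree + b ≤ m + j) →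
    ∃ U V : MvPolynomial (Fin 2) K, f = U * u + V * v ∧
      (U = 0 ∨ U.totalDegree + a ≤ m) ∧ (V = 0 ∨ V.totalDegree + b ≤ m) := by
  induction j with
  | zero => intro U V h hU hV; exact ⟨U, V, h, hU, hV⟩
  | succ j ih =>
    intro U V h hU hV
    by_cases hU0 : U = 0
    · subst hU0
      refine ⟨0, V, h, Or.inl rfl, ?_⟩
      by_cases hV0 : V = 0
      · exact Or.inl hV0
      right
      rw [zero_mul, zero_add] at h
      rw [← hv, ← totalDegree_mul_of_isDomain hV0 hv0, ← h]
      exact hf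
    by_cases hV0 : V = 0
    · subst hV0
      refine ⟨U, 0, h, ?_, Or.inl rfl⟩
      right
      rw [zero_mul, add_zero] at h
      rw [← hu, ← totalDegree_mul_of_isDomain hU0 hu0, ← h]
      exact hf
    replace hU := hU.resolve_left hU0
    replace hV := hV.resolve_left hV0
    obtain ⟨r, hr⟩ : ∃ r, m + (j + 1) = r + a := ⟨m + (j + 1) - a, by omega⟩
    obtain ⟨s, hs⟩ : ∃ s, m + (j + 1) = s + b := ⟨m + (j + 1) - b, by omega⟩
    have hUr : U.totalDegree ≤ r := by omega
    have hVs : V.totalDegree ≤ s := by omega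
    have htop : homogeneousComponent r U * homogeneousComponent a u
        + homogeneousComponent s V * homogeneousComponent b v = 0 := by
      rw [← hc_mul _ _ _ _ hUr hu.le, ← hc_mul _ _ _ _ hVs hv.le, ← hr, ← hs, ← map_add, ← h]
      exact homogeneousComponent_eq_zero _ _ (by omega)
    have hub : homogeneousComponent a u ≠ 0 := fun h0 => by
      rcases drop_top u a hu.le h0 with h1 | h1
      · exact hu0 h1
      · omega
    have hvb : homogeneousComponent b v ≠ 0 := fun h0 => by
      rcases drop_top v b hv.le h0 with h1 | h1
      · exact hv0 h1
      · omega
    have hdvd : homogeneousComponent b v ∣ homogeneousComponent r U := by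
      apply hcop.symm.dvd_of_dvd_mul_right
      refine ⟨-homogeneousComponent s V, ?_⟩
      linear_combination htop
    obtain ⟨W, hW⟩ := hdvd
    have hV2 : homogeneousComponent s V = - W * homogeneousComponent a u := by
      apply mul_right_cancel₀ hvb
      rw [hW] at htop
      linear_combination htop
    by_cases hW0 : W = 0
    · subst hW0
      rw [mul_zero] at hW
      rw [neg_zero, zero_mul] at hV2
      refine ih U V h ?_ ?_
      · rcases drop_top U r hUr hW with h1 | h1
        · exact Or.inl h1
        · right; omega
      · rcases drop_top V s hVs hV2 with h1 | h1
        · exact Or.inl h1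
        · right; omega
    have hdb : (homogeneousComponent b v).totalDegree = b :=
      (homogeneousComponent_isHomogeneous b v).totalDegree hvb
    have hdW : b + W.totalDegree = r := by
      rw [← (homogeneousComponent_isHomogeneous r U).totalDegree (by
        rw [hW]; exact mul_ne_zero hvb hW0), hW, totalDegree_mul_of_isDomain hvb hW0, hdb]
    set c := W.totalDegree with hc
    have hWc : homogeneousComponent c W = W := by
      have h1 := hc_mul _ _ _ _ hdb.le hc.ge
      rw [hdW, ← hW, hc_hc, hc_hc, hW] at h1
      exact (mul_left_cancel₀ hvb h1).symm
    have hs2 : c + a = s := by omega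
    refine ih (U - W * v) (V + W * u) (by rw [h]; ring) ?_ ?_
    · have h1 : (U - W * v).totalDegree ≤ r := (totalDegree_sub _ _).trans
        (max_le hUr ((totalDegree_mul _ _).trans (by omega)))
      have h2 : homogeneousComponent r (U - W * v) = 0 := by
        have h3 := hc_mul W v c b hc.ge hv.le
        rw [add_comm c b, hdW] at h3
        rw [map_sub, h3, hWc, hW]; ring
      rcases drop_top _ r h1 h2 with h1 | h1
      · exact Or.inl h1
      · right; omega
    · have h1 : (V + W * u).totalDegree ≤ s := (totalDegree_add _ _).trans
        (max_le hVs ((totalDegree_mul _ _).trans (by omega)))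
      have h2 : homogeneousComponent s (V + W * u) = 0 := by
        have h3 := hc_mul W u c a hc.ge hu.le
        rw [hs2] at h3
        rw [map_add, h3, hWc, hV2]; ring
      rcases drop_top _ s h1 h2 with h1 | h1
      · exact Or.inl h1
      · right; omega

end top
open MvPolynomial

section loc
variable {K : Type*} [Field K]

theorem slope_arith [CharP K 2] (t0 s0 p q a b X Y: K) (ha : a * t0 * p = 1) (hb : b * s0 * q = 1)
    (ht : t0 = a + 1) (hs : s0 = b + 1) (hab : a + b ≠ 0) (hX : X ≠ 0) (hY : Y ≠ 0)
    (e1 : t0*X^2*p^2+s0*Y^2*q^2 = 0) (e2 : X^3*p^2+Y^3*q^2 = 0) :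
    t0 * Y = s0 * X ∧ t0 * s0 = 1 := by
  have h2 : (2:K) = 0 := CharP.cast_eq_zero K 2
  have hp : p ≠ 0 := by rintro rfl; simp at ha
  have f1 : t0 * Y = s0 * X := by
    have : (X^2*p^2) * (t0 * Y - s0 * X) = 0 := by
      linear_combination Y * e1 - s0 * e2
    have := (mul_eq_zero.1 this).resolve_left (by positivity)
    linear_combination this
  refine ⟨f1, ?_⟩
  have : Y^3 * (t0^3*p^2 + s0^3*q^2) = 0 := by
    linear_combination s0^3 * e2 + p^2*((t0*Y)^2+(t0*Y)*(s0*X)+(s0*X)^2) * f1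
  have := (mul_eq_zero.1 this).resolve_left (by positivity)
  have h3 : t0 * b^2+s0*a^2 = 0 := by
    grind
  grind

/-- Second order Taylor expansion modulo the squares of the two local parameters. -/
theorem taylor (α β : K) (f : MvPolynomial (Fin 2) K) :
    ∃ (c0 c1 c2 c3 : K) (A B : MvPolynomial (Fin 2) K),
      f = C c0 + C c1 * (X 0 - C α) + C c2 * (X 1 - C β)
        + C c3 * ((X 0 - C α) * (X 1 - C β)) + A * (X 0 - C α) ^ 2 + B * (X 1 - C β) ^ 2 := by
  induction f using MvPolynomial.induction_on with
  | C c => exact ⟨c, 0, 0, 0, 0, 0, by simp⟩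
  | add p q hp hq =>
    obtain ⟨c0, c1, c2, c3, A, B, h⟩ := hp
    obtain ⟨d0, d1, d2, d3, A', B', h'⟩ := hq
    refine ⟨c0 + d0, c1 + d1, c2 + d2, c3 + d3, A + A', B + B', ?_⟩
    simp only [map_add]
    linear_combination h + h'
  | mul_X p i hp =>
    obtain ⟨c0, c1, c2, c3, A, B, h⟩ := hp
    fin_cases i
    · refine ⟨c0 * α, c0 + c1 * α, c2 * α, c2 + c3 * α,
        A * X 0 + C c1 + C c3 * (X 1 - C β), B * X 0, ?_⟩
      simp only [map_add, map_mul, Fin.zero_eta]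
      linear_combination X 0 * h
    · refine ⟨c0 * β, c1 * β, c0 + c2 * β, c1 + c3 * β,
        A * X 1, B * X 1 + C c2 + C c3 * (X 0 - C α), ?_⟩
      simp only [map_add, map_mul, Fin.mk_one]
      linear_combination X 1 * h

/-- The local derivative of `P = (x^l+1)/(x+1)` at a root. -/
theorem root_P [CharP K 2] (l : ℕ) (hl : l % 2 = 1) (P : Polynomial K)
    (hP : (Polynomial.X + 1) * P = Polynomial.X ^ l + 1) (α : K) (hα : P.eval α = 0) :
    ∃ p : Polynomial K, P = (Polynomial.X - Polynomial.C α) * p ∧ α * (α + 1) * p.eval α = 1 := by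
  have h2 : (2:K) = 0 := CharP.cast_eq_zero K 2
  obtain ⟨p, hp⟩ := Polynomial.dvd_iff_isRoot.2 hα
  refine ⟨p, hp, ?_⟩
  have e0 := congrArg (Polynomial.eval α) hP
  simp only [Polynomial.eval_mul, hα, Polynomial.eval_add, Polynomial.eval_pow, Polynomial.eval_X,
    Polynomial.eval_one, mul_zero] at e0
  have e1 := congrArg (fun q => Polynomial.eval α (Polynomial.derivative q)) hP
  rw [hp] at e1
  simp [Polynomial.derivative_mul] at e1
  obtain ⟨n, rfl⟩ : ∃ n, l = 2 * n + 1 := ⟨l / 2, by omega⟩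
  simp at e1
  rw [h2] at e1
  rw [pow_succ] at e0
  linear_combination α * e1 - e0 - h2


theorem on_line [CharP K 2] (α β : K) (u v A B A' B' : MvPolynomial (Fin 2) K)
    (c1 c2 c3 d1 d2 d3 : K) (p q : Polynomial K)
    (hu : u = C c1 * (X 0 - C α) + C c2 * (X 1 - C β)
        + C c3 * ((X 0 - C α) * (X 1 - C β)) + A * (X 0 - C α) ^ 2 + B * (X 1 - C β) ^ 2)
    (hv : v = C d1 * (X 0 - C α) + C d2 * (X 1 - C β)
        + C d3 * ((X 0 - C α) * (X 1 - C β)) + A' * (X 0 - C α) ^ 2 + B' * (X 1 - C β) ^ 2)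
    (h : (X 0 + X 1) * (u * v) = (X 0 + 1) * ((X 0 - C α) * Polynomial.aeval (X 0) p) ^ 2
      + (X 1 + 1) * ((X 1 - C β) * Polynomial.aeval (X 1) q) ^ 2) (ξ η : K) :
    (α + β) * (c1 * ξ + c2 * η) * (d1 * ξ + d2 * η)
      = (α + 1) * ξ ^ 2 * (p.eval α) ^ 2 + (β + 1) * η ^ 2 * (q.eval β) ^ 2 ∧
    (c1 * ξ + c2 * η = 0 → d1 * ξ + d2 * η = 0 →
      ξ ^ 3 * (p.eval α) ^ 2 + η ^ 3 * (q.eval β) ^ 2 = 0) := by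
  have h2 : (2:K) = 0 := CharP.cast_eq_zero K 2
  have H2 : (2:Polynomial K) = 0 := CharP.cast_eq_zero _ 2
  let Z : Polynomial K := Polynomial.X
  let ρ : MvPolynomial (Fin 2) K →ₐ[K] Polynomial K :=
    aeval ![Polynomial.C α + Polynomial.C ξ * Z, Polynomial.C β + Polynomial.C η * Z]
  have hx : ρ (X 0) = Polynomial.C α + Polynomial.C ξ * Z := by simp [ρ]
  have hy : ρ (X 1) = Polynomial.C β + Polynomial.C η * Z := by simp [ρ]
  have hC : ∀ c : K, ρ (C c) = Polynomial.C c := fun c => by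
    simp [ρ]
  have hsq : ∀ (r : Polynomial K) (γ ζ : K), ∃ r1 : Polynomial K,
      (Polynomial.aeval (Polynomial.C γ + Polynomial.C ζ * Z) r) =
        Polynomial.C (r.eval γ) + Z * r1 := by
    intro r γ ζ
    refine ⟨(Polynomial.aeval (Polynomial.C γ + Polynomial.C ζ * Z) r).divX, ?_⟩
    conv_lhs => rw [← Polynomial.X_mul_divX_add (Polynomial.aeval _ r)]
    rw [add_comm]
    congr 2
    rw [Polynomial.coeff_zero_eq_eval_zero, ← Polynomial.coe_aeval_eq_eval,
      ← Polynomial.aeval_algHom_apply, ← Polynomial.coe_aeval_eq_eval]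
    simp [Z]
  have hρp : ρ (Polynomial.aeval (X 0) p) =
      Polynomial.aeval (Polynomial.C α + Polynomial.C ξ * Z) p := by
    rw [← hx, Polynomial.aeval_algHom_apply]
  have hρq : ρ (Polynomial.aeval (X 1) q) =
      Polynomial.aeval (Polynomial.C β + Polynomial.C η * Z) q := by
    rw [← hy, Polynomial.aeval_algHom_apply]
  obtain ⟨p1, hp1⟩ := hsq p α ξ
  obtain ⟨q1, hq1⟩ := hsq q β η
  have key := congrArg ρ h
  obtain ⟨R, hR⟩ : ∃ R, ρ u = Z * (Polynomial.C (c1 * ξ + c2 * η) + Z * R) := by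
    refine ⟨Polynomial.C (c3 * ξ * η) + ρ A * Polynomial.C (ξ ^ 2) + ρ B * Polynomial.C (η ^ 2), ?_⟩
    rw [hu]
    simp only [map_add, map_mul, map_sub, map_pow, hx, hy, hC]
    ring
  obtain ⟨S, hS⟩ : ∃ R, ρ v = Z * (Polynomial.C (d1 * ξ + d2 * η) + Z * R) := by
    refine ⟨Polynomial.C (d3 * ξ * η) + ρ A' * Polynomial.C (ξ ^ 2)
      + ρ B' * Polynomial.C (η ^ 2), ?_⟩
    rw [hv]
    simp only [map_add, map_mul, map_sub, map_pow, hx, hy, hC]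
    ring
  rw [map_mul, map_mul, hR, hS] at key
  simp only [map_add, map_mul, map_sub, map_pow, hx, hy, hC, hρp, hρq, hp1, hq1, map_one] at key
  have key2 : (Polynomial.C (α + β) + Polynomial.C (ξ + η) * Z) *
      ((Polynomial.C (c1 * ξ + c2 * η) + Z * R) * (Polynomial.C (d1 * ξ + d2 * η) + Z * S)) =
      (Polynomial.C (α + 1) + Polynomial.C ξ * Z) * Polynomial.C (ξ ^ 2) *
        (Polynomial.C (p.eval α ^ 2) + Z * (Z * p1 ^ 2)) +
      (Polynomial.C (β + 1) + Polynomial.C η * Z) * Polynomial.C (η ^ 2) *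
        (Polynomial.C (q.eval β ^ 2) + Z * (Z * q1 ^ 2)) := by
    have hZ : Z ^ 2 ≠ 0 := pow_ne_zero _ Polynomial.X_ne_zero
    apply mul_left_cancel₀ hZ
    simp only [map_add, map_mul, map_pow, map_one]
    linear_combination key + Z ^ 2 *
      ((Polynomial.C α + 1 + Polynomial.C ξ * Z) * Polynomial.C ξ ^ 2 *
        (Polynomial.C (p.eval α) * Z * p1) + 
      (Polynomial.C β + 1 + Polynomial.C η * Z) * Polynomial.C η ^ 2 *
        (Polynomial.C (q.eval β) * Z * q1)) * H2
  constructor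
  · have := congrArg (Polynomial.eval 0) key2
    simp [Z] at this
    linear_combination this
  · intro e1 e2
    rw [e1, e2] at key2
    have := congrArg (fun r => Polynomial.eval 0 (Polynomial.derivative r)) key2
    simp [Z, Polynomial.derivative_mul, Polynomial.derivative_add, Polynomial.derivative_pow] at this
    linear_combination -this

theorem local_step [CharP K 2] (l : ℕ) (hl : l % 2 = 1) (P : Polynomial K)
    (hP : (Polynomial.X + 1) * P = Polynomial.X ^ l + 1)
    (u v : MvPolynomial (Fin 2) K)
    (h : (X 0 + X 1) * (u * v) = (X 0 + 1) * (Polynomial.aeval (X 0) P) ^ 2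
      + (X 1 + 1) * (Polynomial.aeval (X 1) P) ^ 2)
    (I : Ideal (MvPolynomial (Fin 2) K)) (hu : u ∈ I)
    (hx : (Polynomial.aeval (X 0) P) ^ 2 ∈ I) (hy : (Polynomial.aeval (X 1) P) ^ 2 ∈ I)
    (z : Fin 2 → K) (hI : ∀ f ∈ I, aeval z f = 0) (hvz : aeval z v = 0) :
    ∃ e : MvPolynomial (Fin 2) K, aeval z e ≠ 0 ∧ e * ((X 0 + 1) * (X 1 + 1) + 1) ∈ I := by
  have h2 : (2:K) = 0 := CharP.cast_eq_zero K 2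
  have H2 : (2:MvPolynomial (Fin 2) K) = 0 := CharP.cast_eq_zero _ 2
  have hev : ∀ (r : Polynomial K) (i : Fin 2),
      aeval z (Polynomial.aeval (X i : MvPolynomial (Fin 2) K) r) = r.eval (z i) := by
    intro r i
    rw [← Polynomial.aeval_algHom_apply, aeval_X, Polynomial.coe_aeval_eq_eval]
  have hα : P.eval (z 0) = 0 := by
    have := hI _ hx
    rw [map_pow, hev] at this
    exact pow_eq_zero_iff (two_ne_zero) |>.1 this
  have hβ : P.eval (z 1) = 0 := by
    have := hI _ hy
    rw [map_pow, hev] at this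
    exact pow_eq_zero_iff (two_ne_zero) |>.1 this
  obtain ⟨p, hp, hp1⟩ := root_P l hl P hP _ hα
  obtain ⟨q, hq, hq1⟩ := root_P l hl P hP _ hβ
  have hPx : Polynomial.aeval (X 0 : MvPolynomial (Fin 2) K) P =
      (X 0 - C (z 0)) * Polynomial.aeval (X 0) p := by
    conv_lhs => rw [hp]
    simp [MvPolynomial.algebraMap_eq]
  have hPy : Polynomial.aeval (X 1 : MvPolynomial (Fin 2) K) P =
      (X 1 - C (z 1)) * Polynomial.aeval (X 1) q := by
    conv_lhs => rw [hq]
    simp [MvPolynomial.algebraMap_eq]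
  rw [hPx, hPy] at h
  rw [hPx] at hx
  rw [hPy] at hy
  obtain ⟨c0, c1, c2, c3, A, B, hut⟩ := taylor (z 0) (z 1) u
  obtain ⟨d0, d1, d2, d3, A', B', hvt⟩ := taylor (z 0) (z 1) v
  have hc0 : c0 = 0 := by
    have := hI u hu
    rw [hut] at this
    simpa using this
  have hd0 : d0 = 0 := by
    rw [hvt] at hvz
    simpa using hvz
  subst hc0 hd0
  rw [map_zero, zero_add] at hut hvt
  have L := on_line (z 0) (z 1) u v A B A' B' c1 c2 c3 d1 d2 d3 p q hut hvt h
  have hz : aeval z (Polynomial.aeval (X 0 : MvPolynomial (Fin 2) K) p ^ 2 *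
      Polynomial.aeval (X 1) q ^ 2) = p.eval (z 0) ^ 2 * q.eval (z 1) ^ 2 := by
    rw [map_mul, map_pow, map_pow, hev, hev]
  generalize z 0 = α at *
  generalize z 1 = β at *
  have L10 := (L 1 0).1
  have L01 := (L 0 1).1
  have L11 := (L 1 1).1
  have p0 : p.eval α ≠ 0 := fun h0 => by simp [h0] at hp1
  have q0 : q.eval β ≠ 0 := fun h0 => by simp [h0] at hq1
  have t0 : α + 1 ≠ 0 := fun h0 => by simp [h0] at hp1
  have s0 : β + 1 ≠ 0 := fun h0 => by simp [h0] at hq1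
  have m1 : (α + β) * c1 * d1 ≠ 0 := by
    have : (α + β) * c1 * d1 = (α + 1) * p.eval α ^ 2 := by linear_combination L10
    rw [this]; positivity
  have m2 : (α + β) * c2 * d2 ≠ 0 := by
    have : (α + β) * c2 * d2 = (β + 1) * q.eval β ^ 2 := by linear_combination L01
    rw [this]; positivity
  have hab : α + β ≠ 0 := fun h0 => by simp [h0] at m1
  have hc1 : c1 ≠ 0 := fun h0 => by simp [h0] at m1
  have hc2 : c2 ≠ 0 := fun h0 => by simp [h0] at m2
  have hcr : c1 * d2 + c2 * d1 = 0 := by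
    have : (α + β) * (c1 * d2 + c2 * d1) = 0 := by linear_combination L11 - L10 - L01
    exact (mul_eq_zero.1 this).resolve_left hab
  have M := L c2 c1
  have n1 : c1 * c2 + c2 * c1 = 0 := by linear_combination c1 * c2 * h2
  have n2 : d1 * c2 + d2 * c1 = 0 := by linear_combination hcr
  have M2 := M.2 n1 n2
  have M1 := M.1
  rw [n1, mul_zero, zero_mul] at M1
  obtain ⟨f1, f2⟩ := slope_arith (α + 1) (β + 1) (p.eval α) (q.eval β) α β c2 c1 hp1 hq1 rfl rfl
    hab hc2 hc1 M1.symm M2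
  refine ⟨Polynomial.aeval (X 0) p ^ 2 * Polynomial.aeval (X 1) q ^ 2, ?_, ?_⟩
  · rw [hz]; positivity
  · set e := Polynomial.aeval (X 0 : MvPolynomial (Fin 2) K) p ^ 2 * Polynomial.aeval (X 1) q ^ 2
      with he
    have eX : e * (X 0 - C α) ^ 2 ∈ I := by
      have := I.mul_mem_left (Polynomial.aeval (X 1) q ^ 2) hx
      convert this using 1
      rw [he]; ring
    have eY : e * (X 1 - C β) ^ 2 ∈ I := by
      have := I.mul_mem_left (Polynomial.aeval (X 0) p ^ 2) hy
      convert this using 1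
      rw [he]; ring
    have cinv : ∀ f : MvPolynomial (Fin 2) K, C c2 * f ∈ I → f ∈ I := by
      intro f hf
      have := I.mul_mem_left (C c2⁻¹) hf
      rwa [← mul_assoc, ← map_mul, inv_mul_cancel₀ hc2, map_one, one_mul] at this
    have eXY : e * ((X 0 - C α) * (X 1 - C β)) ∈ I := by
      apply cinv
      have r1 := I.mul_mem_left (e * (X 0 - C α)) hu
      have r2 := I.mul_mem_left (C c1 + C c3 * (X 1 - C β) + A * (X 0 - C α)) eX
      have r3 := I.mul_mem_left (B * (X 0 - C α)) eY
      have := I.sub_mem (I.sub_mem r1 r2) r3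
      convert this using 1
      rw [hut]; ring
    apply cinv
    have r1 := I.mul_mem_left (C (α + 1) * e) hu
    have r2 := I.mul_mem_left (C c2 - C (α + 1) * C c3) eXY
    have r3 := I.mul_mem_left (- C (α + 1) * A) eX
    have r4 := I.mul_mem_left (- C (α + 1) * B) eY
    have := I.add_mem (I.add_mem (I.add_mem r1 r2) r3) r4
    convert this using 1
    have F1 := congrArg (C : K → MvPolynomial (Fin 2) K) f1
    have F2 := congrArg (C : K → MvPolynomial (Fin 2) K) f2
    simp only [map_add, map_mul, map_one] at F1 F2 ⊢
    rw [hut]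
    linear_combination C c2 * e * F2 - e * (X 0 - C α) * F1 + C c2 * e * H2

theorem mem_span [IsAlgClosed K] [CharP K 2] (l : ℕ) (hl : l % 2 = 1) (P : Polynomial K)
    (hP : (Polynomial.X + 1) * P = Polynomial.X ^ l + 1)
    (u v : MvPolynomial (Fin 2) K)
    (h : (X 0 + X 1) * (u * v) = (X 0 + 1) * (Polynomial.aeval (X 0) P) ^ 2
      + (X 1 + 1) * (Polynomial.aeval (X 1) P) ^ 2) :
    ((X 0 + 1) * (X 1 + 1) + 1 : MvPolynomial (Fin 2) K) ∈ Ideal.span {u, v} := by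
  have H2 : (2:MvPolynomial (Fin 2) K) = 0 := CharP.cast_eq_zero _ 2
  set I : Ideal (MvPolynomial (Fin 2) K) := Ideal.span {u, v} with hI
  have hu : u ∈ I := Ideal.subset_span (by simp)
  have hv : v ∈ I := Ideal.subset_span (by simp)
  have hsq : ∀ (i : Fin 2) (f : MvPolynomial (Fin 2) K), pderiv i (f ^ 2) = 0 := by
    intro i f
    rw [pow_two, (pderiv i).leibniz]
    simp only [smul_eq_mul]
    linear_combination (f * pderiv i f) * H2
  have hx : (Polynomial.aeval (X 0) P) ^ 2 ∈ I := by
    have e := congrArg (pderiv 0) h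
    simp only [map_add, (pderiv (0 : Fin 2)).leibniz, hsq, smul_eq_mul, pderiv_X_self,
      pderiv_X_of_ne (show (1 : Fin 2) ≠ 0 by decide), pderiv_one] at e
    have : (Polynomial.aeval (X 0) P) ^ 2 = (v + (X 0 + X 1) * pderiv 0 v) * u
      + ((X 0 + X 1) * pderiv 0 u) * v := by linear_combination -e
    rw [this]
    exact I.add_mem (I.mul_mem_left _ hu) (I.mul_mem_left _ hv)
  have hy : (Polynomial.aeval (X 1) P) ^ 2 ∈ I := by
    have e := congrArg (pderiv 1) h
    simp only [map_add, (pderiv (1 : Fin 2)).leibniz, hsq, smul_eq_mul, pderiv_X_self,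
      pderiv_X_of_ne (show (0 : Fin 2) ≠ 1 by decide), pderiv_one] at e
    have : (Polynomial.aeval (X 1) P) ^ 2 = (v + (X 0 + X 1) * pderiv 1 v) * u
      + ((X 0 + X 1) * pderiv 1 u) * v := by linear_combination -e
    rw [this]
    exact I.add_mem (I.mul_mem_left _ hu) (I.mul_mem_left _ hv)
  set f : MvPolynomial (Fin 2) K := (X 0 + 1) * (X 1 + 1) + 1 with hf
  let J : Ideal (MvPolynomial (Fin 2) K) := Submodule.colon I {f}
  have hJ : ∀ e, e ∈ J ↔ e * f ∈ I := fun e => Submodule.mem_colon_singleton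
  by_contra hfI
  have hJt : J ≠ ⊤ := fun ht => hfI (by
    have := (hJ 1).1 (by rw [ht]; trivial)
    rwa [one_mul] at this)
  obtain ⟨m, hm, hJm⟩ := Ideal.exists_le_maximal J hJt
  obtain ⟨z, rfl⟩ := (isMaximal_iff_eq_vanishingIdeal_singleton (K := K)).1 hm
  have hIz : ∀ g ∈ I, aeval z g = 0 := fun g hg =>
    (mem_vanishingIdeal_singleton_iff z g).1 (hJm ((hJ g).2 (I.mul_mem_right _ hg)))
  obtain ⟨e, he, heI⟩ := local_step l hl P hP u v h I hu hx hy z hIz (hIz v hv)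
  exact he ((mem_vanishingIdeal_singleton_iff z e).1 (hJm ((hJ e).2 heI)))

end loc

section main
variable {K : Type*} [Field K]

theorem relprime_XX : IsRelPrime (X 0 : MvPolynomial (Fin 2) K) (X 1) := by
  have hirr : Irreducible (X 0 : MvPolynomial (Fin 2) K) := (X_prime).irreducible
  rw [hirr.isRelPrime_iff_not_dvd]
  rw [X_dvd_X]
  simp

/-- One of the two factors has degree at most one half: contradiction. -/
theorem no_factor [IsAlgClosed K] [CharP K 2] (l : ℕ) (hl : l % 2 = 1) (hl3 : 3 < l)
    (P : Polynomial K)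
    (hP : (Polynomial.X + 1) * P = Polynomial.X ^ l + 1)
    (u v : MvPolynomial (Fin 2) K)
    (h : (X 0 + X 1) * (u * v) = (X 0 + 1) * (Polynomial.aeval (X 0) P) ^ 2
      + (X 1 + 1) * (Polynomial.aeval (X 1) P) ^ 2)
    (hg : (X 0 + X 1) * (X 0 + 1) * (X 1 + 1) * (u * v) =
        X 0 * X 1 ^ (2 * l) + X 1 * X 0 ^ (2 * l) + X 0 ^ (2 * l) + X 1 ^ (2 * l) + X 0 + X 1)
    (hdeg : (u * v).totalDegree = 2 * l - 2) (hle : u.totalDegree ≤ v.totalDegree) :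
    IsUnit u := by
  have H2 : (2:MvPolynomial (Fin 2) K) = 0 := CharP.cast_eq_zero _ 2
  have huv : u * v ≠ 0 := by
    intro h0; rw [h0, totalDegree_zero] at hdeg; omega
  have hu0 : u ≠ 0 := left_ne_zero_of_mul huv
  have hv0 : v ≠ 0 := right_ne_zero_of_mul huv
  obtain ⟨a, ha⟩ : ∃ a, u.totalDegree = a := ⟨_, rfl⟩
  obtain ⟨b, hb⟩ : ∃ b, v.totalDegree = b := ⟨_, rfl⟩
  have hab : a + b = 2 * l - 2 := by
    rw [← ha, ← hb, ← totalDegree_mul_of_isDomain hu0 hv0, hdeg]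
  -- leading forms
  have hXX : homogeneousComponent 1 (X 0 + X 1 : MvPolynomial (Fin 2) K) = X 0 + X 1 :=
    homogeneousComponent_eq_self ((isHomogeneous_X K 0).add (isHomogeneous_X K 1))
  have dX1 : ∀ i : Fin 2, (X i + 1 : MvPolynomial (Fin 2) K).totalDegree ≤ 1 := fun i =>
    (totalDegree_add _ _).trans (by simp)
  have hX1 : ∀ i : Fin 2, homogeneousComponent 1 (X i + 1 : MvPolynomial (Fin 2) K) = X i := by
    intro i
    rw [map_add, homogeneousComponent_eq_self (isHomogeneous_X K i),
      homogeneousComponent_eq_zero _ _ (by simp), add_zero]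
  have lead : (X 0 + X 1) * X 0 * X 1 *
      (homogeneousComponent a u * homogeneousComponent b v) =
      X 0 * X 1 ^ (2 * l) + X 1 * X 0 ^ (2 * l) := by
    have e := congrArg (homogeneousComponent (1 + 1 + 1 + (a + b))) hg
    have dXX : (X 0 + X 1 : MvPolynomial (Fin 2) K).totalDegree ≤ 1 :=
      (totalDegree_add _ _).trans (by simp)
    have d2 : ((X 0 + X 1) * (X 0 + 1) : MvPolynomial (Fin 2) K).totalDegree ≤ 1 + 1 :=
      (totalDegree_mul _ _).trans (add_le_add dXX (dX1 0))
    have d3 : ((X 0 + X 1) * (X 0 + 1) * (X 1 + 1) : MvPolynomial (Fin 2) K).totalDegree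
        ≤ 1 + 1 + 1 :=
      (totalDegree_mul _ _).trans (add_le_add d2 (dX1 1))
    have d4 : (u * v).totalDegree ≤ a + b := by omega
    rw [hc_mul _ _ _ _ d3 d4, hc_mul _ _ _ _ d2 (dX1 1), hc_mul _ _ _ _ dXX (dX1 0),
      hc_mul _ _ _ _ ha.le hb.le, hXX, hX1, hX1] at e
    rw [e]
    have z1 : ∀ i j : Fin 2, homogeneousComponent (1 + 1 + 1 + (a + b))
        (X i * X j ^ (2 * l) : MvPolynomial (Fin 2) K) = X i * X j ^ (2 * l) := by
      intro i j
      apply homogeneousComponent_eq_self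
      have := (isHomogeneous_X K i).mul (isHomogeneous_X_pow (R := K) j (2 * l))
      rwa [show 1 + 1 + 1 + (a + b) = 1 + 2 * l by omega]
    have z2 : ∀ i : Fin 2, homogeneousComponent (1 + 1 + 1 + (a + b))
        (X i ^ (2 * l) : MvPolynomial (Fin 2) K) = 0 := by
      intro i
      apply homogeneousComponent_eq_zero
      rw [totalDegree_X_pow]; omega
    have z3 : ∀ i : Fin 2, homogeneousComponent (1 + 1 + 1 + (a + b))
        (X i : MvPolynomial (Fin 2) K) = 0 := by
      intro i
      apply homogeneousComponent_eq_zero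
      rw [totalDegree_X]; omega
    simp only [map_add, z1, z2, z3, add_zero]
  obtain ⟨n, rfl⟩ : ∃ n, l = n + 1 := ⟨l - 1, by omega⟩
  have lead2 : (X 0 + X 1) * (homogeneousComponent a u * homogeneousComponent b v) =
      (X 0 ^ (2 * n + 1) + X 1 ^ (2 * n + 1) : MvPolynomial (Fin 2) K) := by
    have hne : (X 0 * X 1 : MvPolynomial (Fin 2) K) ≠ 0 := mul_ne_zero (X_ne_zero _) (X_ne_zero _)
    apply mul_left_cancel₀ hne
    rw [show 2 * (n + 1) = 2 * n + 1 + 1 by ring] at lead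
    linear_combination lead
  have hdX : ∀ (d : MvPolynomial (Fin 2) K) (i j : ℕ), d ∣ X 0 ^ i → d ∣ X 1 ^ j → IsUnit d :=
    fun d i j h0 h1 => (relprime_XX (K := K)).pow h0 h1
  have hcop : IsRelPrime (homogeneousComponent a u) (homogeneousComponent b v) := by
    rintro d ⟨r, hr⟩ ⟨s, hs⟩
    have hd : X 0 ^ (2 * n + 1) + X 1 ^ (2 * n + 1) = d ^ 2 * ((X 0 + X 1) * r * s) := by
      rw [← lead2, hr, hs]; ring
    have hsq : ∀ (i : Fin 2), pderiv i (d ^ 2) = 0 := by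
      intro i
      rw [pow_two, (pderiv i).leibniz]
      simp only [smul_eq_mul]
      linear_combination (d * pderiv i d) * H2
    have hde : ∀ i : Fin 2, d ∣ pderiv i (X 0 ^ (2 * n + 1) + X 1 ^ (2 * n + 1)) := by
      intro i
      rw [hd, (pderiv i).leibniz, hsq, smul_zero, add_zero, smul_eq_mul, pow_two, mul_assoc]
      exact dvd_mul_right _ _
    apply hdX d (2 * n) (2 * n)
    · have := hde 0
      simp only [map_add, pderiv_pow, pderiv_X_self,
        pderiv_X_of_ne (show (1 : Fin 2) ≠ 0 by decide)] at this
      simpa [H2] using this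
    · have := hde 1
      simp only [map_add, pderiv_pow, pderiv_X_self,
        pderiv_X_of_ne (show (0 : Fin 2) ≠ 1 by decide)] at this
      simpa [H2] using this
  have hmem := mem_span (n + 1) hl P hP u v h
  set f : MvPolynomial (Fin 2) K := (X 0 + 1) * (X 1 + 1) + 1 with hf
  have hfd : f.totalDegree ≤ 1 + 1 := (totalDegree_add _ _).trans (max_le
    ((totalDegree_mul _ _).trans (add_le_add (dX1 0) (dX1 1))) (by simp))
  obtain ⟨U, V, hUV⟩ := Ideal.mem_span_pair.1 hmem
  obtain ⟨U, V, hUV, hU, hV⟩ := descent u v f a b (1 + 1) ha hb hu0 hv0 hcop hfd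
    (U.totalDegree + V.totalDegree + a + b) U V hUV.symm (Or.inr (by omega)) (Or.inr (by omega))
  have hV0 : V = 0 := hV.resolve_right (by omega)
  rw [hV0, zero_mul, add_zero] at hUV
  have hftop : homogeneousComponent (1 + 1) f = X 0 * X 1 := by
    rw [hf, map_add, hc_mul _ _ _ _ (dX1 0) (dX1 1), hX1, hX1,
      homogeneousComponent_eq_zero _ _ (by simp), add_zero]
  have hU0 : U ≠ 0 := by
    rintro rfl
    rw [hUV, zero_mul, map_zero] at hftop
    exact mul_ne_zero (X_ne_zero _) (X_ne_zero _) hftop.symm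
  replace hU := hU.resolve_left hU0
  have hdvd : homogeneousComponent a u ∣ X 0 * X 1 := by
    rw [← hftop, hUV]
    obtain ⟨c, hc⟩ : ∃ c, 1 + 1 = c + a := ⟨2 - a, by omega⟩
    rw [hc, hc_mul _ _ _ _ (by omega) ha.le]
    exact Dvd.intro_left _ rfl
  have hdF : homogeneousComponent a u ∣
      (X 0 ^ (2 * n + 1) + X 1 ^ (2 * n + 1) : MvPolynomial (Fin 2) K) := by
    rw [← lead2]; exact (dvd_mul_right _ _).trans (dvd_mul_left _ _)
  have r0 : IsRelPrime (homogeneousComponent a u) (X 0) := by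
    intro d h1 h2
    have h3 : d ∣ X 0 ^ (2 * n + 1) := h2.trans (dvd_pow_self _ (by omega))
    exact hdX d _ _ h3 ((dvd_add_right h3).1 (h1.trans hdF))
  have r1 : IsRelPrime (homogeneousComponent a u) (X 1) := by
    intro d h1 h2
    have h3 : d ∣ X 1 ^ (2 * n + 1) := h2.trans (dvd_pow_self _ (by omega))
    exact hdX d _ _ ((dvd_add_left h3).1 (h1.trans hdF)) h3
  have hunit : IsUnit (homogeneousComponent a u) := (r0.mul_right r1) dvd_rfl hdvd
  have ha0 : a = 0 := by
    obtain ⟨w, hw⟩ := hunit.exists_right_inv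
    have hn : homogeneousComponent a u ≠ 0 := hunit.ne_zero
    have hw0 : w ≠ 0 := by rintro rfl; simp at hw
    have h1 := totalDegree_mul_of_isDomain hn hw0
    rw [hw, totalDegree_one, (homogeneousComponent_isHomogeneous a u).totalDegree hn] at h1
    omega
  rw [ha0] at ha
  have hc := totalDegree_eq_zero_iff_eq_C.1 ha
  rw [hc]
  apply IsUnit.map
  rw [isUnit_iff_ne_zero]
  intro h0
  rw [h0, map_zero] at hc
  exact hu0 hc

theorem irr_G [IsAlgClosed K] [CharP K 2] (l : ℕ) (hl : l % 2 = 1) (hl3 : 3 < l)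
    (G : MvPolynomial (Fin 2) K)
    (hg : (X 0 + X 1) * (X 0 + 1) * (X 1 + 1) * G =
        X 0 * X 1 ^ (2 * l) + X 1 * X 0 ^ (2 * l) + X 0 ^ (2 * l) + X 1 ^ (2 * l) + X 0 + X 1)
    (hdeg : G.totalDegree = 2 * l - 2) : Irreducible G := by
  have H2 : (2:MvPolynomial (Fin 2) K) = 0 := CharP.cast_eq_zero _ 2
  obtain ⟨P, hP⟩ : (Polynomial.X + 1 : Polynomial K) ∣ Polynomial.X ^ l + 1 := by
    have := (Nat.odd_iff.2 hl).add_dvd_pow_add_pow (Polynomial.X : Polynomial K) 1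
    rwa [one_pow] at this
  replace hP := hP.symm
  have hPi : ∀ i : Fin 2, (X i + 1) ^ 2 * (Polynomial.aeval (X i : MvPolynomial (Fin 2) K) P) ^ 2
      = X i ^ (2 * l) + 1 := by
    intro i
    have e := congrArg (Polynomial.aeval (X i : MvPolynomial (Fin 2) K)) hP
    simp only [map_mul, map_add, map_pow, Polynomial.aeval_X, map_one] at e
    rw [← mul_pow, e, mul_comm 2 l, pow_mul]
    linear_combination X i ^ l * H2
  have hne : ∀ i : Fin 2, (X i + 1 : MvPolynomial (Fin 2) K) ≠ 0 := by
    intro i h0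
    have := congrArg (aeval (fun _ => (0 : K))) h0
    simp at this
  have h : (X 0 + X 1) * G = (X 0 + 1) * (Polynomial.aeval (X 0) P) ^ 2
      + (X 1 + 1) * (Polynomial.aeval (X 1) P) ^ 2 := by
    apply mul_left_cancel₀ (mul_ne_zero (hne 0) (hne 1))
    linear_combination hg - (X 1 + 1) * hPi 0 - (X 0 + 1) * hPi 1 - H2
  constructor
  · intro hu
    obtain ⟨w, hw⟩ := hu.exists_right_inv
    have hw0 : w ≠ 0 := by rintro rfl; simp at hw
    have h1 := totalDegree_mul_of_isDomain hu.ne_zero hw0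
    rw [hw, totalDegree_one] at h1
    omega
  · rintro u v rfl
    rcases le_total u.totalDegree v.totalDegree with hle | hle
    · exact Or.inl (no_factor l hl hl3 P hP u v h hg hdeg hle)
    · rw [mul_comm u v] at h hg hdeg
      exact Or.inr (no_factor l hl hl3 P hP v u h hg hdeg hle)

end main

/-- For `k ≡ 2 (mod 4)` with `k > 6`, the polynomial `g_k ∈ 𝔽₂[x,y]` of degree
`k-2` with `(x+y)(x+1)(y+1)·g_k = x·y^k + y·x^k + x^k + y^k + x + y` is absolutely
irreducible, i.e. irreducible over the algebraic closure of `𝔽₂`. -/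
theorem g_absolutely_irreducible_two_mod_four
    (k : ℕ) (hk : k % 4 = 2) (hk6 : 6 < k)
    (g : MvPolynomial (Fin 2) (ZMod 2)) (hdeg : g.totalDegree = k - 2)
    (hg : (X 0 + X 1) * (X 0 + 1) * (X 1 + 1) * g =
        X 0 * X 1 ^ k + X 1 * X 0 ^ k + X 0 ^ k + X 1 ^ k + X 0 + X 1) :
    Irreducible (MvPolynomial.map (algebraMap (ZMod 2) (AlgebraicClosure (ZMod 2))) g) := by
  have hcK : CharP (AlgebraicClosure (ZMod 2)) 2 :=
    charP_of_injective_algebraMap (algebraMap (ZMod 2) (AlgebraicClosure (ZMod 2))).injective 2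
  obtain ⟨l, rfl⟩ : ∃ l, k = 2 * l := ⟨k / 2, by omega⟩
  have hl : l % 2 = 1 := by omega
  have hl3 : 3 < l := by omega
  set φ := algebraMap (ZMod 2) (AlgebraicClosure (ZMod 2)) with hφ
  have hφi : Function.Injective φ := φ.injective
  have hG := congrArg (MvPolynomial.map φ) hg
  simp only [map_add, map_mul, map_pow, map_X, map_one] at hG
  have hD : (MvPolynomial.map φ g).totalDegree = 2 * l - 2 := by
    rw [← hdeg]
    simp only [totalDegree, support_map_of_injective _ hφi]
  exact irr_G l hl hl3 _ hG hD
end
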